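/- arXiv:2601.21195 — 2 statements merged into one kernel-verified Lean document; each statement's English description precedes it below -/
import Mathlib

section
/- Let q ≠ 0, let m = (m_1,…,m_ℓ) be a composition of n with all m_j ≥ 1, and let x̄_1,…,x̄_ℓ be arbitrary weights. The characteristic polynomial of the transition matrix of T_{W_m}(q,x̄) equals the product over all upper sets S of the poset P_m, with S determined by the weak composition a = (a_1,…,a_ℓ) (0 ≤ a_j ≤ m_j), of (t − λ_a(q,x̄))^{d_{P_m∖S}}, where λ_a(q,x̄) = ∑_{j=1}^ℓ x̄_j · q^{a_{j+1}+⋯+a_ℓ}·[a_j]_q / (q^{n−n_j}·[m_j]_q) and d_{P_m∖S} is the number of poset derangements of the complement P_m∖S. In particular, each λ_a(q,x̄) is an eigenvalue of T_{W_m}(q,x̄) with algebraic multiplicity d_{P_m∖S}. -/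
/-!
STATEMENT 5: characteristic polynomial of the q-Tsetlin library on words.
-/

open scoped Classical

noncomputable section

namespace QTsetlin

variable {K : Type} [Field K]

/-- The q-integer `[a]_q = 1 + q + ⋯ + q^{a-1}`. -/
def qInt (q : K) (a : ℕ) : K := ∑ r ∈ Finset.range a, q ^ r

/-- `n_j = m_1 + ⋯ + m_j` (the first `j` parts of the composition, `j : ℕ`). -/
def nsum (l : ℕ) (m : Fin l → ℕ) (j : ℕ) : ℕ :=
  ∑ t ∈ Finset.univ.filter fun t : Fin l => (t : ℕ) < j, m t

/-- Words of length `n` in the alphabet `{1,…,l}` with exactly `m j` occurrences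
of each letter `j` (letters are 0-based in Lean). -/
abbrev Words (n l : ℕ) (m : Fin l → ℕ) : Type :=
  {w : Fin n → Fin l // ∀ j, (Finset.univ.filter fun i => w i = j).card = m j}

/-- Matrix (row convention) of the Hecke generator `T_{k+1}` (paper indexing) on words. -/
def genMatW (n l : ℕ) (m : Fin l → ℕ) (q : K) (k : ℕ) :
    Matrix (Words n l m) (Words n l m) K := fun w u =>
  if h : k + 1 < n then
    if w.1 ⟨k + 1, h⟩ ≤ w.1 ⟨k, Nat.lt_of_succ_lt h⟩ then
      (if u.1 = w.1 ∘ Equiv.swap ⟨k, Nat.lt_of_succ_lt h⟩ ⟨k + 1, h⟩ then q else 0)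
    else
      (if u.1 = w.1 ∘ Equiv.swap ⟨k, Nat.lt_of_succ_lt h⟩ ⟨k + 1, h⟩ then 1 else 0)
        + (if u = w then q - 1 else 0)
  else 0

/-- Matrix of the product `T_k T_{k-1} ⋯ T_1` (paper indexing) on words. -/
def prodGenW (n l : ℕ) (m : Fin l → ℕ) (q : K) : ℕ → Matrix (Words n l m) (Words n l m) K
  | 0 => 1
  | k + 1 => genMatW n l m q k * prodGenW n l m q k

/-- Matrix of the weighting operator `X_{W_m}(q,x̄)`. -/
def XW (n l : ℕ) (m : Fin l → ℕ) (q : K) (xb : Fin l → K) :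
    Matrix (Words n l m) (Words n l m) K := fun w u =>
  if u = w then
    (if h : 0 < n then
      xb (w.1 ⟨0, h⟩) /
        (q ^ (∑ t ∈ Finset.univ.filter fun t : Fin l => w.1 ⟨0, h⟩ < t, m t)
          * qInt q (m (w.1 ⟨0, h⟩)))
    else 0)
  else 0

/-- Matrix of the q-Tsetlin library operator `T_{W_m}(q,x̄)` on words (row convention). -/
def TWm (n l : ℕ) (m : Fin l → ℕ) (q : K) (xb : Fin l → K) :
    Matrix (Words n l m) (Words n l m) K :=
  (∑ k ∈ Finset.range n, prodGenW n l m q k) * XW n l m q xb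

/-- The (0-based) index of the chain of `P_c` containing the (0-based) label `v`:
the smallest `j` with `v < c_1 + ⋯ + c_{j+1}`. -/
def blockOf (l : ℕ) (c : Fin l → ℕ) (v : ℕ) : ℕ :=
  sInf {j : ℕ | v < nsum l c (j + 1)}

/-- `π` (as a listing of the labels `π_1 π_2 … π_N`) is a linear extension of the union of
chains `P_c` on `N` labels, labelled consecutively within chains: labels belonging to the
same chain must occur in increasing order. -/
def isLinExt (l N : ℕ) (c : Fin l → ℕ) (π : Equiv.Perm (Fin N)) : Prop :=
  ∀ a b : Fin N, a < b → blockOf l c (π a) = blockOf l c (π b) → π a < π b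

/-- The number of poset derangements of the union of chains `P_c` (with `N = c_1 + ⋯ + c_l`
labels): linear extensions that are derangements as bijections on labels. -/
def posetDerangeCount (l N : ℕ) (c : Fin l → ℕ) : ℕ :=
  (Finset.univ.filter fun π : Equiv.Perm (Fin N) =>
    isLinExt l N c π ∧ ∀ a, π a ≠ a).card

/-- The eigenvalue
`λ_a(q,x̄) = ∑_j x̄_j q^{a_{j+1} + ⋯ + a_ℓ} [a_j]_q / (q^{n - n_j} [m_j]_q)`
attached to an upper set of `P_m` described by a weak composition `a ≤ m`. -/
def lambdaA (n l : ℕ) (m : Fin l → ℕ) (q : K) (xb : Fin l → K) (a : Fin l → ℕ) : K :=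
  ∑ j : Fin l,
    xb j * (q ^ (∑ t ∈ Finset.univ.filter fun t : Fin l => j < t, a t) * qInt q (a j)) /
      (q ^ (n - nsum l m ((j : ℕ) + 1)) * qInt q (m j))

section sLin
variable {K : Type} [Field K]

lemma charpoly_ses [Infinite K] {E F : Type} [AddCommGroup E] [Module K E] [FiniteDimensional K E]
    [AddCommGroup F] [Module K F] [FiniteDimensional K F] (f : E →ₗ[K] F)
    (hf : Function.Surjective f) (a : Module.End K E) (b : Module.End K F)
    (hab : ∀ x, f (a x) = b (f x)) (ha : ∀ x ∈ LinearMap.ker f, a x ∈ LinearMap.ker f) :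
    a.charpoly = (a.restrict ha).charpoly * b.charpoly := by
  apply Polynomial.funext
  intro t
  rw [Polynomial.eval_mul, LinearMap.eval_charpoly, LinearMap.eval_charpoly, LinearMap.eval_charpoly]
  set e : Module.End K E := algebraMap K _ t - a with he
  have hinv : LinearMap.ker f ≤ (LinearMap.ker f).comap e := by
    intro x hx
    have h1 := ha x hx
    simp only [LinearMap.mem_ker, Submodule.mem_comap] at *
    simp [he, Module.algebraMap_end_apply, hx, h1]
  rw [LinearMap.det_eq_det_mul_det (LinearMap.ker f) e hinv]
  congr 1
  rw [← LinearMap.det_conj _ (f.quotKerEquivOfSurjective hf)]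
  congr 1
  apply LinearMap.ext
  intro y
  obtain ⟨x, rfl⟩ := hf y
  have : (f.quotKerEquivOfSurjective hf).symm (f x) = Submodule.Quotient.mk x := by
    rw [LinearEquiv.symm_apply_eq]
    rfl
  simp only [LinearMap.comp_apply, LinearEquiv.coe_coe, this]
  rw [Submodule.mapQ_apply]
  change f (e x) = _
  simp [he, Module.algebraMap_end_apply, hab]

/-- characteristic polynomial on an invariant subspace -/
def cpGen {V : Type} [AddCommGroup V] [Module K V] (p : Submodule K V) (fd : FiniteDimensional K p)
    (a : Module.End K V) (h : ∀ x ∈ p, a x ∈ p) : Polynomial K := (a.restrict h).charpoly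

lemma cpGen_zero {V : Type} [AddCommGroup V] [Module K V] (p : Submodule K V)
    (fd : FiniteDimensional K p)
    (a : Module.End K V) (h : ∀ x ∈ p, a x ∈ p) (h0 : ∀ x ∈ p, a x = 0) :
    cpGen p fd a h = Polynomial.X ^ Module.finrank K p := by
  have h3 : a.restrict h = 0 := by
    apply LinearMap.ext
    rintro ⟨x, hx⟩
    apply Subtype.ext
    exact h0 x hx
  rw [cpGen, h3, LinearMap.charpoly_zero]

lemma charpoly_sub [Infinite K] {V : Type} [AddCommGroup V] [Module K V]
    (p p' k : Submodule K V) (h1 : FiniteDimensional K p) (h2 : FiniteDimensional K p')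
    (h3 : FiniteDimensional K k) (f a a' : Module.End K V) (c : K)
    (hk : ∀ x, x ∈ k ↔ x ∈ p ∧ f x = 0)
    (hf : ∀ x ∈ p, f x ∈ p') (hs : ∀ y ∈ p', ∃ x ∈ p, f x = y)
    (ha : ∀ x ∈ p, a x ∈ p) (ha' : ∀ x ∈ p', a' x ∈ p') (hak : ∀ x ∈ k, a x ∈ k)
    (hc : ∀ x ∈ p, f (a x) = c • f x + a' (f x)) :
    cpGen p h1 a ha = cpGen k h3 a hak * (cpGen p' h2 a' ha').comp (Polynomial.X - Polynomial.C c) ∧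
    Module.finrank K p = Module.finrank K k + Module.finrank K p' := by
  set g : p →ₗ[K] p' := f.restrict hf with hg
  have hgs : Function.Surjective g := by
    rintro ⟨y, hy⟩
    obtain ⟨x, hx, rfl⟩ := hs y hy
    exact ⟨⟨x, hx⟩, rfl⟩
  have hker : ∀ x : p, x ∈ LinearMap.ker g ↔ (x : V) ∈ k := by
    intro x
    rw [hk, LinearMap.mem_ker]
    constructor
    · intro h
      exact ⟨x.2, congrArg Subtype.val h⟩
    · intro h
      exact Subtype.ext h.2
  let φ : LinearMap.ker g ≃ₗ[K] k :=
    { toFun := fun x => ⟨x.1.1, (hker _).1 x.2⟩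
      invFun := fun x => ⟨⟨x.1, ((hk _).1 x.2).1⟩, (hker _).2 x.2⟩
      map_add' := fun _ _ => rfl
      map_smul' := fun _ _ => rfl
      left_inv := fun _ => rfl
      right_inv := fun _ => rfl }
  constructor
  · have hA : ∀ x ∈ LinearMap.ker g, a.restrict ha x ∈ LinearMap.ker g := by
      intro x hx
      rw [hker] at hx ⊢
      exact hak _ hx
    unfold cpGen
    rw [charpoly_ses g hgs (a.restrict ha) (a'.restrict ha' - (-c) • 1) ?_ hA]
    · rw [LinearMap.charpoly_sub_smul]
      congr 1
      · rw [← LinearEquiv.charpoly_conj φ]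
        congr 1
      · simp [sub_eq_add_neg]
    · intro x
      apply Subtype.ext
      have := hc x x.2
      simp [hg, LinearMap.restrict_apply, this, add_comm]
  · rw [← LinearEquiv.finrank_eq φ, ← LinearMap.finrank_range_add_finrank_ker g,
      LinearMap.range_eq_top.2 hgs, finrank_top, add_comm]
end sLin

section sAlg
variable {K : Type} [Field K]

/-- free module on lists -/
abbrev LV (K : Type) [Field K] (l : ℕ) : Type := List (Fin l) →₀ K

/-- prepend a letter -/
def opU (K : Type) [Field K] {l : ℕ} (j : Fin l) : Module.End K (LV K l) :=
  Finsupp.lmapDomain K K (List.cons j)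

/-- skew derivation on lists -/
def Dl {l : ℕ} (q : K) : List (Fin l) → Fin l → LV K l
  | [], _ => 0
  | a :: u, j => (if j ≤ a then q else 1) • opU K a (Dl q u j) +
      if j = a then Finsupp.single u 1 + (q - 1) • ∑ i, if j < i then opU K i (Dl q u i) else 0
      else 0

/-- skew derivation -/
def opD {l : ℕ} (q : K) (j : Fin l) : Module.End K (LV K l) :=
  Finsupp.linearCombination K (fun w => Dl q w j)

variable {l : ℕ} (q : K)

lemma opD_single (j : Fin l) (w : List (Fin l)) : opD q j (Finsupp.single w 1) = Dl q w j := by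
  simp [opD]

lemma opU_single (j : Fin l) (w : List (Fin l)) (c : K) :
    opU K j (Finsupp.single w c) = Finsupp.single (j :: w) c := by
  simp [opU]

lemma LV_ext {W : Type} [AddCommGroup W] [Module K W] {f g : LV K l →ₗ[K] W}
    (h : ∀ w, f (Finsupp.single w 1) = g (Finsupp.single w 1)) : f = g := by
  apply Finsupp.lhom_ext'
  intro w
  apply LinearMap.ext_ring
  exact h w

lemma opD_opU (j a : Fin l) (v : LV K l) :
    opD q j (opU K a v) = (if j ≤ a then q else 1) • opU K a (opD q j v) +
      if j = a then v + (q - 1) • ∑ i, if j < i then opU K i (opD q i v) else 0 else 0 := by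
  let R : LV K l →ₗ[K] LV K l := (if j ≤ a then q else 1) • (opU K a ∘ₗ opD q j) +
      if j = a then LinearMap.id + (q - 1) • ∑ i, if j < i then opU K i ∘ₗ opD q i else 0 else 0
  have hR : ∀ v, R v = (if j ≤ a then q else 1) • opU K a (opD q j v) +
      if j = a then v + (q - 1) • ∑ i, if j < i then opU K i (opD q i v) else 0 else 0 := by
    intro v
    simp only [R, LinearMap.add_apply, LinearMap.smul_apply, LinearMap.comp_apply]
    congr 1
    split_ifs
    · simp only [LinearMap.add_apply, LinearMap.smul_apply, LinearMap.id_apply,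
        LinearMap.sum_apply]
      congr 2
      apply Finset.sum_congr rfl
      intro i _
      split_ifs <;> rfl
    · rfl
  rw [← hR]
  have : opD q j ∘ₗ opU K a = R := by
    apply LV_ext
    intro w
    rw [hR]
    simp only [LinearMap.comp_apply, opU_single, opD_single]
    rfl
  exact LinearMap.congr_fun this v

lemma opD_nil (j : Fin l) (c : K) : opD q j (Finsupp.single [] c) = 0 := by
  simp [opD, Dl]

lemma opD_comm (j k : Fin l) (hjk : j < k) (v : LV K l) :
    opD q k (opD q j v) = q • opD q j (opD q k v) := by
  have : opD q k ∘ₗ opD q j = q • (opD q j ∘ₗ opD q k) := by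
    apply LV_ext
    intro w
    simp only [LinearMap.comp_apply, LinearMap.smul_apply]
    induction w generalizing j k with
    | nil => simp [opD_nil]
    | cons a u ih =>
      rw [← opU_single]
      set v : LV K l := Finsupp.single u 1 with hv
      rw [opD_opU, opD_opU]
      rcases lt_trichotomy a j with haj | haj | haj
      · have h1 : ¬ j ≤ a := not_le.2 haj
        have h2 : ¬ k ≤ a := not_le.2 (haj.trans hjk)
        have h3 : j ≠ a := haj.ne'
        have h4 : k ≠ a := (haj.trans hjk).ne'
        simp only [h1, h2, h3, h4, if_false, one_smul, add_zero, opD_opU]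
        rw [ih j k hjk, map_smul]
      · subst haj
        have h2 : ¬ k ≤ a := not_le.2 hjk
        have h4 : k ≠ a := hjk.ne'
        simp only [le_refl, h2, h4, if_false, if_true, one_smul, add_zero, map_add, map_smul,
          opD_opU, map_sum, apply_ite (opD q k), map_zero]
        have key : ∀ i : Fin l, (if a < i then
            ((if k ≤ i then q else 1) • opU K i (opD q k (opD q i v)) +
              if k = i then opD q i v + (q - 1) • ∑ i', (if k < i' then opU K i' (opD q i' (opD q i v)) else 0)
              else 0) else 0) =
            (if a < i then (if k ≤ i then 1 else q) • opU K i (opD q i (opD q k v)) else 0) +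
            (if i = k then ((q - 1) • opU K k (opD q k (opD q k v)) + opD q k v +
              (q - 1) • ∑ i', (if k < i' then opU K i' (opD q i' (opD q k v)) else 0)) else 0) := by
          intro i
          rcases lt_trichotomy i k with hik | hik | hik
          · have e1 : ¬ k ≤ i := not_le.2 hik
            have e2 : k ≠ i := hik.ne'
            have e3 : i ≠ k := hik.ne
            simp only [e1, e2, e3, if_false, add_zero, one_smul]
            rw [ih i k hik, map_smul]
          · subst hik
            simp only [le_refl, if_true, hjk, one_smul]
            module
          · have e1 : k ≤ i := hik.le
            have e2 : k ≠ i := hik.ne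
            have e3 : i ≠ k := hik.ne'
            simp only [e1, e2, e3, if_false, if_true, add_zero, one_smul, hjk.trans hik]
            rw [ih k i hik, map_smul]
        rw [Finset.sum_congr rfl (fun i _ => key i), Finset.sum_add_distrib]
        rw [Finset.sum_ite_eq' Finset.univ k]
        simp only [Finset.mem_univ, if_true]
        rw [ih a k hjk, map_smul]
        have key2 : (∑ i, if a < i then (if k ≤ i then (1:K) else q) • opU K i (opD q i (opD q k v)) else 0)
          + (q - 1) • (∑ i', (if k < i' then opU K i' (opD q i' (opD q k v)) else 0))
          + (q - 1) • opU K k (opD q k (opD q k v)) =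
          q • ∑ i, if a < i then opU K i (opD q i (opD q k v)) else 0 := by
          rw [Finset.smul_sum, Finset.smul_sum]
          have : (q - 1) • opU K k (opD q k (opD q k v)) = ∑ i, if i = k then
            (q - 1) • opU K i (opD q i (opD q k v)) else 0 := by
            rw [Finset.sum_ite_eq' Finset.univ k]; simp
          rw [this, ← Finset.sum_add_distrib, ← Finset.sum_add_distrib]
          apply Finset.sum_congr rfl
          intro i _
          rcases lt_trichotomy i k with hik | hik | hik
          · have e1 : ¬ k ≤ i := not_le.2 hik
            have e2 : ¬ k < i := not_lt.2 hik.le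
            have e3 : i ≠ k := hik.ne
            simp only [e1, e2, e3, if_false, smul_zero, add_zero]
            split_ifs <;> simp
          · subst hik
            simp only [le_refl, if_true, hjk, one_smul, lt_irrefl, if_false]
            module
          · have e3 : i ≠ k := hik.ne'
            simp only [hik.le, hik, e3, if_false, if_true, hjk.trans hik]
            module
        rw [smul_add q, smul_add q, smul_smul q (q-1), mul_comm q (q-1), mul_smul (q-1) q,
          ← key2]
        module
      · rcases lt_trichotomy a k with hak | hak | hak
        · have h1 : ¬ k ≤ a := not_le.2 hak
          have h2 : k ≠ a := hak.ne'
          have h3 : j ≠ a := haj.ne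
          simp only [h1, h2, h3, haj.le, if_false, if_true, one_smul, add_zero, opD_opU, map_smul]
          rw [ih j k hjk, map_smul]
        · subst hak
          have h3 : j ≠ a := haj.ne
          simp only [h3, haj.le, le_refl, if_false, if_true, one_smul, add_zero, opD_opU, map_smul,
            map_add, map_sum, apply_ite (opD q j), map_zero]
          rw [ih j a hjk, map_smul]
          have key : ∀ i : Fin l, (if a < i then opU K i (opD q i (opD q j v)) else 0) =
            (if a < i then (if j ≤ i then q else 1) • opU K i (opD q j (opD q i v)) +
              (if j = i then opD q i v + (q - 1) • ∑ i', (if j < i' then opU K i' (opD q i' (opD q i v)) else 0)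
              else 0) else 0) := by
            intro i
            by_cases hi : a < i
            · have e1 : j < i := haj.trans hi
              simp only [hi, e1.le, e1.ne, if_true, if_false, add_zero]
              rw [ih j i e1, map_smul]
            · simp only [hi, if_false]
          rw [Finset.sum_congr rfl (fun i _ => key i)]
        · have h3 : j ≠ a := haj.ne
          have h4 : k ≠ a := hak.ne
          simp only [h3, h4, haj.le, hak.le, if_false, if_true, add_zero, opD_opU, map_smul]
          rw [ih j k hjk, map_smul]
  exact LinearMap.congr_fun this v

/-- the library operator -/
def opA (y : Fin l → K) : Module.End K (LV K l) := ∑ j, y j • (opU K j ∘ₗ opD q j)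

lemma opA_apply (y : Fin l → K) (v : LV K l) :
    opA q y v = ∑ j, y j • opU K j (opD q j v) := by
  simp [opA, LinearMap.sum_apply]

/-- modified weights -/
def modW (k : Fin l) (y : Fin l → K) : Fin l → K := fun j =>
  if k < j then y j + (q - 1) * y k else q * y j

lemma opD_opA (k : Fin l) (y : Fin l → K) (v : LV K l) :
    opD q k (opA q y v) = y k • opD q k v + opA q (modW q k y) (opD q k v) := by
  rw [opA_apply, opA_apply, map_sum]
  have key : ∀ j, opD q k (y j • opU K j (opD q j v)) =
    (if j = k then y k • opD q k v + (y k * (q-1)) • ∑ i, (if k < i then opU K i (opD q i (opD q k v)) else 0) else 0)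
     + y j • (if k < j then 1 else q) • opU K j (opD q j (opD q k v)) := by
    intro j
    rw [map_smul, opD_opU]
    rcases lt_trichotomy j k with hik | hik | hik
    · have e1 : ¬ k ≤ j := not_le.2 hik
      have e2 : k ≠ j := hik.ne'
      have e3 : j ≠ k := hik.ne
      have e4 : ¬ k < j := not_lt.2 hik.le
      simp only [e1, e2, e3, e4, if_false, add_zero, zero_add, one_smul]
      rw [opD_comm q j k hik, map_smul]
    · subst hik
      simp only [le_refl, if_true, lt_irrefl, if_false]
      module
    · have e2 : k ≠ j := hik.ne
      have e3 : j ≠ k := hik.ne'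
      simp only [hik.le, hik, e2, e3, if_false, if_true, zero_add, add_zero, one_smul]
      rw [opD_comm q k j hik, map_smul]
  rw [Finset.sum_congr rfl (fun i _ => key i), Finset.sum_add_distrib,
    Finset.sum_ite_eq' Finset.univ k]
  simp only [Finset.mem_univ, if_true]
  rw [add_assoc, Finset.smul_sum, ← Finset.sum_add_distrib]
  congr 1
  apply Finset.sum_congr rfl
  intro i _
  unfold modW
  split_ifs
  · module
  · module
end sAlg

section sAlg2
variable {K : Type} [Field K]
variable {l : ℕ} (q : K)

/-- homogeneous part -/
def grV (K : Type) [Field K] {l : ℕ} (m : Fin l → ℕ) : Submodule K (LV K l) :=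
  Finsupp.supported K K {w : List (Fin l) | ∀ j, w.count j = m j}

lemma grV_finite_set (m : Fin l → ℕ) : {w : List (Fin l) | ∀ j, w.count j = m j}.Finite := by
  apply (List.finite_length_eq (Fin l) (∑ j, m j)).subset
  intro w hw
  simp only [Set.mem_ofPred_eq] at *
  have h := Multiset.sum_count_eq_card (s := Finset.univ) (m := (w : Multiset (Fin l))) (by simp)
  simp only [Multiset.coe_count, Multiset.coe_card] at h
  rw [← h]
  exact Finset.sum_congr rfl fun j _ => hw j

instance grV_fin (m : Fin l → ℕ) : FiniteDimensional K (grV K m) := by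
  have := (grV_finite_set m).to_subtype
  exact Module.Finite.equiv (Finsupp.supportedEquivFinsupp (M := K) (R := K)
    {w : List (Fin l) | ∀ j, w.count j = m j}).symm

lemma grV_induction (m : Fin l → ℕ) (f : Module.End K (LV K l)) (p : Submodule K (LV K l))
    (h : ∀ w : List (Fin l), (∀ j, w.count j = m j) → f (Finsupp.single w 1) ∈ p)
    (v : LV K l) (hv : v ∈ grV K m) : f v ∈ p := by
  rw [grV, Finsupp.supported_eq_span_single] at hv
  have : Submodule.span K ((fun i => Finsupp.single i (1:K)) '' {w : List (Fin l) | ∀ j, w.count j = m j})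
    ≤ p.comap f := by
    rw [Submodule.span_le]
    rintro _ ⟨w, hw, rfl⟩
    exact h w hw
  exact this hv

lemma opU_mem (m : Fin l → ℕ) (j : Fin l) (v : LV K l) (hv : v ∈ grV K m) :
    opU K j v ∈ grV K (m + Pi.single j 1) := by
  apply grV_induction m _ _ _ v hv
  intro w hw
  rw [opU_single]
  apply Finsupp.single_mem_supported
  intro i
  rw [List.count_cons, hw]
  by_cases h : j = i
  · subst h; simp
  · simp [h, Pi.single_apply, Ne.symm h]

lemma opU_supp (S T : Set (List (Fin l))) (a : Fin l) (h : ∀ x ∈ S, a :: x ∈ T) (v : LV K l)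
    (hv : v ∈ Finsupp.supported K K S) : opU K a v ∈ Finsupp.supported K K T := by
  rw [Finsupp.supported_eq_span_single] at hv
  have : Submodule.span K ((fun i => Finsupp.single i (1:K)) '' S)
    ≤ (Finsupp.supported K K T).comap (opU K a) := by
    rw [Submodule.span_le]
    rintro _ ⟨w, hw, rfl⟩
    change opU K a (Finsupp.single w 1) ∈ Finsupp.supported K K T
    rw [opU_single]
    exact Finsupp.single_mem_supported _ _ (h w hw)
  exact this hv

lemma Dl_supp (w : List (Fin l)) (j : Fin l) :
    Dl q w j ∈ Finsupp.supported K K {u : List (Fin l) | (j :: u).Perm w} := by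
  induction w generalizing j with
  | nil => exact Submodule.zero_mem _
  | cons a u ih =>
    rw [Dl]
    apply Submodule.add_mem
    · apply Submodule.smul_mem
      apply opU_supp _ _ _ _ _ (ih j)
      intro x hx
      exact (List.Perm.swap a j x).trans (hx.cons a)
    · split_ifs with h
      · subst h
        apply Submodule.add_mem
        · apply Finsupp.single_mem_supported
          exact List.Perm.refl _
        · apply Submodule.smul_mem
          apply Submodule.sum_mem
          intro i _
          split_ifs
          · apply opU_supp _ _ _ _ _ (ih i)
            intro x hx
            exact hx.cons j
          · exact Submodule.zero_mem _
      · exact Submodule.zero_mem _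

lemma opD_mem (m : Fin l → ℕ) (j : Fin l) (v : LV K l) (hv : v ∈ grV K m) :
    opD q j v ∈ grV K (m - Pi.single j 1) := by
  apply grV_induction m _ _ _ v hv
  intro w hw
  rw [opD_single]
  apply Finsupp.supported_mono _ (Dl_supp q w j)
  intro u hu i
  have := hu.count_eq i
  rw [hw, List.count_cons] at this
  by_cases h : j = i
  · subst h; simp at *; omega
  · simp [h, Pi.single_apply, Ne.symm h] at *; omega

lemma opD_zero (m : Fin l → ℕ) (j : Fin l) (hj : m j = 0) (v : LV K l) (hv : v ∈ grV K m) :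
    opD q j v = 0 := by
  have := grV_induction m (opD q j) ⊥ ?_ v hv
  · simpa using this
  intro w hw
  rw [opD_single]
  have h1 := Dl_supp q w j
  have : {u : List (Fin l) | (j :: u).Perm w} = ∅ := by
    ext u
    simp only [Set.mem_ofPred_eq, Set.mem_empty_iff_false, iff_false]
    intro h
    have := h.count_eq j
    rw [hw, hj] at this
    simp at this
  rw [this] at h1
  simpa using h1

lemma sub_add_single (m : Fin l → ℕ) (j : Fin l) (h : 1 ≤ m j) :
    m - Pi.single j 1 + Pi.single j 1 = m := by
  ext i
  by_cases hi : i = j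
  · subst hi; simp; omega
  · simp [hi]

/-- partial joint kernels -/
def Kers (s : ℕ) (m : Fin l → ℕ) : Submodule K (LV K l) :=
  grV K m ⊓ ⨅ k : Fin l, ⨅ _ : s ≤ (k : ℕ), LinearMap.ker (opD q k)

lemma mem_Kers (s : ℕ) (m : Fin l → ℕ) (v : LV K l) :
    v ∈ Kers q s m ↔ v ∈ grV K m ∧ ∀ k : Fin l, s ≤ (k : ℕ) → opD q k v = 0 := by
  simp [Kers, Submodule.mem_iInf]

instance Kers_fin (s : ℕ) (m : Fin l → ℕ) : FiniteDimensional K (Kers q s m) := by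
  unfold Kers; infer_instance

lemma opA_mem_gr (m : Fin l → ℕ) (y : Fin l → K) (v : LV K l) (hv : v ∈ grV K m) :
    opA q y v ∈ grV K m := by
  rw [opA_apply]
  apply Submodule.sum_mem
  intro j _
  apply Submodule.smul_mem
  by_cases h : m j = 0
  · rw [opD_zero q m j h v hv, map_zero]; exact Submodule.zero_mem _
  · have := opU_mem (K := K) _ j _ (opD_mem q m j v hv)
    rwa [sub_add_single m j (by omega)] at this

lemma opA_mem (s : ℕ) (m : Fin l → ℕ) (y : Fin l → K) (v : LV K l) (hv : v ∈ Kers q s m) :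
    opA q y v ∈ Kers q s m := by
  rw [mem_Kers] at *
  refine ⟨opA_mem_gr q m y v hv.1, fun k hk => ?_⟩
  rw [opD_opA, hv.2 k hk]
  simp

lemma opD_Kers (j : Fin l) (m : Fin l → ℕ) (v : LV K l) (hv : v ∈ Kers q (j + 1) m) :
    opD q j v ∈ Kers q (j + 1) (m - Pi.single j 1) := by
  rw [mem_Kers] at *
  refine ⟨opD_mem q m j v hv.1, fun k hk => ?_⟩
  rw [opD_comm q j k (Fin.lt_def.2 hk), hv.2 k hk]
  simp

lemma opU_Kers (j : Fin l) (m : Fin l → ℕ) (hj : 1 ≤ m j) (v : LV K l)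
    (hv : v ∈ Kers q (j + 1) (m - Pi.single j 1)) :
    opU K j v ∈ Kers q (j + 1) m := by
  rw [mem_Kers] at *
  refine ⟨?_, fun k hk => ?_⟩
  · have := opU_mem (K := K) _ j _ hv.1
    rwa [sub_add_single m j hj] at this
  · rw [opD_opU, hv.2 k hk]
    have : k ≠ j := by rintro rfl; omega
    simp [this]

lemma opD_opU_same (j : Fin l) (v : LV K l) (hv : ∀ k : Fin l, (j : ℕ) + 1 ≤ k → opD q k v = 0) :
    opD q j (opU K j v) = v + q • opU K j (opD q j v) := by
  rw [opD_opU]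
  have : (∑ i, if j < i then opU K i (opD q i v) else 0) = 0 := by
    apply Finset.sum_eq_zero
    intro i _
    split_ifs with h
    · rw [hv i (Fin.lt_def.1 h), map_zero]
    · rfl
  simp [this, add_comm]

lemma opD_pow_opU (j : Fin l) (r : ℕ) (v : LV K l)
    (hv : ∀ k : Fin l, (j : ℕ) + 1 ≤ k → opD q k v = 0) :
    (opD q j ^ (r + 1)) (opU K j v) =
      qInt q (r + 1) • (opD q j ^ r) v + q ^ (r + 1) • opU K j ((opD q j ^ (r + 1)) v) := by
  induction r generalizing v with
  | zero => simp [opD_opU_same q j v hv, qInt]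
  | succ r ih =>
    have e : ∀ n (x : LV K l), (opD q j ^ (n + 1)) x = (opD q j ^ n) (opD q j x) := by
      intro n x; rw [pow_succ, Module.End.mul_apply]
    rw [e (r + 1), e (r + 1), opD_opU_same q j v hv, map_add, map_smul, ih]
    · have h1 : qInt q (r + 1 + 1) = 1 + q * qInt q (r + 1) := by
        unfold qInt
        rw [Finset.sum_range_succ', Finset.mul_sum, add_comm]
        congr 1
        · simp
        · apply Finset.sum_congr rfl; intros; ring
      rw [e r v, h1]
      module
    · intro k hk
      rw [opD_comm q j k (Fin.lt_def.2 hk), hv k hk]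
      simp

lemma opD_nilp (j : Fin l) (r : ℕ) (m : Fin l → ℕ) (hr : m j < r) (v : LV K l)
    (hv : v ∈ grV K m) : (opD q j ^ r) v = 0 := by
  induction r generalizing m v with
  | zero => omega
  | succ r ih =>
    rw [pow_succ, Module.End.mul_apply]
    by_cases h : m j = 0
    · rw [opD_zero q m j h v hv, map_zero]
    · apply ih (m - Pi.single j 1) _ _ (opD_mem q m j v hv)
      simp; omega

lemma opD_surj (hq : ∀ r, qInt q (r + 1) ≠ 0) (j : Fin l) (m : Fin l → ℕ) (hj : 1 ≤ m j)
    (v : LV K l) (hv : v ∈ Kers q (j + 1) (m - Pi.single j 1)) :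
    ∃ u ∈ Kers q (j + 1) m, opD q j u = v := by
  suffices H : ∀ r, ∀ v ∈ Kers q (j + 1) (m - Pi.single j 1), (opD q j ^ r) v = 0 →
      ∃ u ∈ Kers q (j + 1) m, opD q j u = v from
    H _ v hv (opD_nilp q j _ _ (Nat.lt_succ_self _) v ((mem_Kers q _ _ _).1 hv).1)
  intro r
  induction r with
  | zero => intro v _ h; exact ⟨0, Submodule.zero_mem _, by simpa using h.symm⟩
  | succ r ih =>
    intro v hv h
    have hU := opU_Kers q j m hj v hv
    have hc := hq r
    have g1 : v - (qInt q (r + 1))⁻¹ • opD q j (opU K j v) ∈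
        Kers q (j + 1) (m - Pi.single j 1) :=
      Submodule.sub_mem _ hv (Submodule.smul_mem _ _ (opD_Kers q j m _ hU))
    have g2 : (opD q j ^ r) (v - (qInt q (r + 1))⁻¹ • opD q j (opU K j v)) = 0 := by
      rw [map_sub, map_smul, ← Module.End.mul_apply (opD q j ^ r) (opD q j), ← pow_succ,
        opD_pow_opU q j r v ((mem_Kers q _ _ _).1 hv).2, h]
      simp [smul_smul, hc]
    obtain ⟨u, hu, hu'⟩ := ih _ g1 g2
    refine ⟨u + (qInt q (r + 1))⁻¹ • opU K j v,
        Submodule.add_mem _ hu (Submodule.smul_mem _ _ hU), ?_⟩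
    rw [map_add, hu', map_smul, sub_add_cancel]

/-- characteristic polynomial on partial kernels -/
def cpK (s : ℕ) (m : Fin l → ℕ) (y : Fin l → K) : Polynomial K :=
  cpGen (V := LV K l) (Kers q s m) (Kers_fin q s m) (opA q y) (opA_mem q s m y)

lemma cpK_rec [Infinite K] (hq : ∀ r, qInt q (r + 1) ≠ 0) (j : Fin l) (m : Fin l → ℕ)
    (hj : 1 ≤ m j) (y : Fin l → K) :
    cpK q (j + 1) m y = cpK q j m y *
      (cpK q (j + 1) (m - Pi.single j 1) (modW q j y)).comp (Polynomial.X - Polynomial.C (y j)) ∧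
    Module.finrank K (Kers q (j + 1) m) = Module.finrank K (Kers q j m) +
      Module.finrank K (Kers q (j + 1) (m - Pi.single j 1)) := by
  apply charpoly_sub (Kers q (j + 1) m) (Kers q (j + 1) (m - Pi.single j 1)) (Kers q j m)
    (Kers_fin q _ _) (Kers_fin q _ _) (Kers_fin q _ _) (opD q j) (opA q y) (opA q (modW q j y)) (y j)
  · intro x
    rw [mem_Kers, mem_Kers, and_assoc]
    refine and_congr_right fun _ => ⟨fun h => ⟨fun k hk => h k (by omega), h j le_rfl⟩, ?_⟩
    rintro ⟨h1, h2⟩ k hk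
    rcases hk.eq_or_lt with h | h
    · have : j = k := Fin.ext h
      rwa [← this]
    · exact h1 k h
  · exact opD_Kers q j m
  · exact opD_surj q hq j m hj
  · intro x _
    exact opD_opA q j y x

lemma Kers_eq (j : Fin l) (m : Fin l → ℕ) (hj : m j = 0) : Kers q (j + 1) m = Kers q j m := by
  ext x
  rw [mem_Kers, mem_Kers]
  refine and_congr_right fun hx => ⟨fun h k hk => ?_, fun h k hk => h k (by omega)⟩
  rcases hk.eq_or_lt with h' | h'
  · have : j = k := Fin.ext h'
    rw [← this]
    exact opD_zero q m j hj x hx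
  · exact h k h'

lemma cpK_eq (s t : ℕ) (m : Fin l → ℕ) (h : Kers q s m = Kers q t m) (y : Fin l → K) :
    cpK q s m y = cpK q t m y := by
  unfold cpK
  congr 1

/-- eigenvalue -/
def lam (y : Fin l → K) (a : Fin l → ℕ) : K :=
  ∑ j : Fin l, y j * (q ^ (∑ t ∈ Finset.univ.filter fun t : Fin l => j < t, a t) * qInt q (a j))

lemma qInt_mul (a : ℕ) : (q - 1) * qInt q a = q ^ a - 1 := by
  unfold qInt; exact mul_geom_sum q a

lemma tele (b : Fin l → ℕ) (i : ℕ) (hi : i ≤ l) :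
    ∑ j ∈ Finset.univ.filter (fun j : Fin l => i ≤ (j : ℕ)),
      (q - 1) * (q ^ (∑ t ∈ Finset.univ.filter fun t : Fin l => j < t, b t) * qInt q (b j)) =
    q ^ (∑ t ∈ Finset.univ.filter fun t : Fin l => i ≤ (t : ℕ), b t) - 1 := by
  induction hi using Nat.decreasingInduction with
  | self =>
    have : (Finset.univ.filter fun j : Fin l => l ≤ (j : ℕ)) = ∅ := by
      ext j; simp
    simp [this]
  | of_succ i hi ih =>
    have h : (Finset.univ.filter fun j : Fin l => i ≤ (j : ℕ)) =
      insert (⟨i, hi⟩ : Fin l) (Finset.univ.filter fun j : Fin l => i + 1 ≤ (j : ℕ)) := by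
      ext j; simp [Fin.ext_iff]; omega
    have h' : (Finset.univ.filter fun t : Fin l => (⟨i, hi⟩ : Fin l) < t) =
      (Finset.univ.filter fun j : Fin l => i + 1 ≤ (j : ℕ)) := by
      ext j; simp only [Finset.mem_filter, Finset.mem_univ, true_and, Fin.lt_def]; omega
    rw [h, Finset.sum_insert (by simp), Finset.sum_insert (by simp), ih, h', pow_add]
    have := qInt_mul q (b ⟨i, hi⟩)
    linear_combination (q ^ (∑ t ∈ Finset.univ.filter fun j : Fin l => i + 1 ≤ (j : ℕ), b t)) * this

lemma lam_rec (k : Fin l) (y : Fin l → K) (b : Fin l → ℕ) :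
    lam q y (b + Pi.single k 1) = y k + lam q (modW q k y) b := by
  have ht := tele q b (k + 1) k.2
  have hf : (Finset.univ.filter fun t : Fin l => (k : ℕ) + 1 ≤ t) =
      (Finset.univ.filter fun t : Fin l => k < t) := by
    ext j; simp only [Finset.mem_filter, Finset.mem_univ, true_and, Fin.lt_def]; omega
  rw [hf] at ht
  rw [Finset.sum_filter] at ht
  unfold lam
  set G := q ^ (∑ t ∈ Finset.univ.filter fun t : Fin l => k < t, b t) with hG
  have key : ∀ j : Fin l, y j * (q ^ (∑ t ∈ Finset.univ.filter fun t : Fin l => j < t,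
      (b + Pi.single k 1 : Fin l → ℕ) t) * qInt q ((b + Pi.single k 1 : Fin l → ℕ) j)) =
      modW q k y j * (q ^ (∑ t ∈ Finset.univ.filter fun t : Fin l => j < t, b t) * qInt q (b j))
      + (if j = k then y k * G else 0) - y k * (if k < j then (q - 1) *
      (q ^ (∑ t ∈ Finset.univ.filter fun t : Fin l => j < t, b t) * qInt q (b j)) else 0) := by
    intro j
    have hs : (∑ t ∈ Finset.univ.filter fun t : Fin l => j < t, (b + Pi.single k 1 : Fin l → ℕ) t) =
      (∑ t ∈ Finset.univ.filter fun t : Fin l => j < t, b t) + if j < k then 1 else 0 := by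
      simp only [Pi.add_apply, Finset.sum_add_distrib]
      congr 1
      simp [Pi.single_apply, Finset.sum_ite_eq']
    rw [hs]
    rcases lt_trichotomy j k with h | h | h
    · have e1 : ¬ k < j := not_lt.2 h.le
      simp [h, e1, h.ne, modW, pow_succ]; ring
    · subst h
      have h1 : qInt q (b j + 1) = 1 + q * qInt q (b j) := by
        unfold qInt
        rw [Finset.sum_range_succ', Finset.mul_sum, add_comm]
        congr 1
        · simp
        · apply Finset.sum_congr rfl; intros; ring
      simp [modW, h1, ← hG]; ring
    · have e1 : ¬ j < k := not_lt.2 h.le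
      simp [h, e1, h.ne', modW]; ring
  rw [Finset.sum_congr rfl (fun j _ => key j), Finset.sum_sub_distrib, Finset.sum_add_distrib,
    ← Finset.mul_sum, ht, Finset.sum_ite_eq' Finset.univ k]
  simp; ring

/-- index set -/
def idx (s : ℕ) (m : Fin l → ℕ) : Finset (Fin l → ℕ) :=
  (Finset.Iic m).filter fun a => ∀ k : Fin l, s ≤ (k : ℕ) → a k = 0

theorem cpK_prod [Infinite K] (hq : ∀ r, qInt q (r + 1) ≠ 0) (s : ℕ) (hs : s ≤ l) :
    ∀ (m : Fin l → ℕ) (y : Fin l → K), cpK q s m y = ∏ a ∈ idx s m,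
      (Polynomial.X - Polynomial.C (lam q y a)) ^ Module.finrank K (Kers q 0 (m - a)) := by
  induction s with
  | zero =>
    intro m y
    have h1 : idx 0 m = {0} := by
      ext a
      simp only [idx, Finset.mem_filter, Finset.mem_Iic, Finset.mem_singleton]
      constructor
      · intro h; ext k; exact h.2 k (Nat.zero_le _)
      · rintro rfl; exact ⟨zero_le, fun _ _ => rfl⟩
    rw [h1, Finset.prod_singleton]
    have h2 : lam q y 0 = 0 := by simp [lam, qInt]
    rw [cpK, cpGen_zero, h2]
    · rw [tsub_zero, Polynomial.C_0, sub_zero]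
    · intro x hx
      rw [mem_Kers] at hx
      rw [opA_apply]
      apply Finset.sum_eq_zero
      intro j _
      rw [hx.2 j (Nat.zero_le _)]; simp
  | succ s ih =>
    intro m
    set j : Fin l := ⟨s, hs⟩ with hj
    have ih := ih (by omega)
    generalize hr : m j = r
    induction r generalizing m with
    | zero =>
      intro y
      rw [cpK_eq q (s + 1) s m (Kers_eq q j m hr), ih]
      apply Finset.prod_congr _ fun _ _ => rfl
      ext a
      simp only [idx, Finset.mem_filter, Finset.mem_Iic]
      refine and_congr_right fun ha => ⟨fun h k hk => h k (by omega), fun h k hk => ?_⟩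
      rcases hk.eq_or_lt with h' | h'
      · have : j = k := Fin.ext h'
        have h5 : a j ≤ m j := ha j
        rw [← this]; omega
      · exact h k h'
    | succ r ihr =>
      intro y
      have h1 := (cpK_rec q hq j m (by omega) y).1
      change cpK q (s + 1) m y = cpK q s m y * (cpK q (s + 1) _ _).comp _ at h1
      rw [h1, ih, ihr (m - Pi.single j 1) (by simp; omega), Polynomial.prod_comp]
      rw [← Finset.prod_filter_mul_prod_filter_not (idx (s + 1) m) (fun a => a j = 0)]
      congr 1
      · apply Finset.prod_congr _ fun _ _ => rfl
        ext a
        simp only [idx, Finset.mem_filter, Finset.mem_Iic, and_assoc]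
        refine and_congr_right fun ha => ⟨fun h => ⟨fun k hk => h k (by omega), h j le_rfl⟩, ?_⟩
        rintro ⟨h1, h2⟩ k hk
        rcases hk.eq_or_lt with h | h
        · have : j = k := Fin.ext h
          rwa [← this]
        · exact h1 k h
      · refine Finset.prod_bij' (fun b _ => b + Pi.single j 1) (fun a _ => a - Pi.single j 1)
          ?_ ?_ ?_ ?_ ?_
        · intro b hb
          simp only [idx, Finset.mem_filter, Finset.mem_Iic] at *
          refine ⟨⟨?_, ?_⟩, ?_⟩
          · rw [← sub_add_single m j (by omega)]
            exact add_le_add_left hb.1 _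
          · intro k hk
            have : k ≠ j := by rintro rfl; simp [hj] at hk
            simp [this, hb.2 k hk]
          · simp
        · intro a ha
          simp only [idx, Finset.mem_filter, Finset.mem_Iic] at *
          refine ⟨tsub_le_tsub_right ha.1.1 _, ?_⟩
          intro k hk
          simp [ha.1.2 k hk]
        · intro b hb; simp
        · intro a ha
          simp only [idx, Finset.mem_filter, Finset.mem_Iic] at ha
          exact sub_add_single a j (by omega)
        · intro b hb
          simp only [Polynomial.pow_comp, Polynomial.sub_comp, Polynomial.X_comp,
            Polynomial.C_comp]
          rw [lam_rec, Polynomial.C_add, sub_sub, add_comm b, ← tsub_add_eq_tsub_tsub]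
end sAlg2

section sComb
/-- inverse linear extensions -/
def LE' (N : ℕ) (β : ℕ → ℕ) (p : Equiv.Perm (Fin N)) : Prop :=
  ∀ a b : Fin N, a < b → β a = β b → p a < p b

/-- no fixed points in the blocks from `s` on -/
def NF (N : ℕ) (β : ℕ → ℕ) (s : ℕ) (p : Equiv.Perm (Fin N)) : Prop :=
  ∀ a : Fin N, s ≤ β a → p a ≠ a

/-- count -/
def cntP (N : ℕ) (β : ℕ → ℕ) (s : ℕ) : ℕ :=
  (Finset.univ.filter fun p : Equiv.Perm (Fin N) => LE' N β p ∧ NF N β s p).card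

/-- insert a fixed point -/
def insP {N : ℕ} (v : Fin (N + 1)) (p : Equiv.Perm (Fin N)) : Equiv.Perm (Fin (N + 1)) :=
  ((finSuccEquiv' v).trans (Equiv.optionCongr p)).trans (finSuccEquiv' v).symm

lemma insP_at {N : ℕ} (v : Fin (N + 1)) (p : Equiv.Perm (Fin N)) : insP v p v = v := by
  simp [insP]

lemma insP_succAbove {N : ℕ} (v : Fin (N + 1)) (p : Equiv.Perm (Fin N)) (k : Fin N) :
    insP v p (v.succAbove k) = v.succAbove (p k) := by
  simp [insP]

lemma insP_inj {N : ℕ} (v : Fin (N + 1)) (p p' : Equiv.Perm (Fin N)) (h : insP v p = insP v p') :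
    p = p' := by
  ext k
  have := congrArg (fun e => e (v.succAbove k)) h
  simp only [insP_succAbove] at this
  rw [Fin.succAbove_right_injective this]

lemma exists_insP {N : ℕ} (v : Fin (N + 1)) (p : Equiv.Perm (Fin (N + 1))) (h : p v = v) :
    ∃ p', insP v p' = p := by
  have h1 : ∀ k, ∃ i, v.succAbove i = p (v.succAbove k) := by
    intro k
    apply Fin.exists_succAbove_eq
    intro h2
    exact Fin.succAbove_ne v k (p.injective (h2.trans h.symm))
  choose f hf using h1
  have hinj : Function.Injective f := by
    intro a b hab
    have : p (v.succAbove a) = p (v.succAbove b) := by rw [← hf, ← hf, hab]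
    exact Fin.succAbove_right_injective (p.injective this)
  refine ⟨Equiv.ofBijective f (Finite.injective_iff_bijective.1 hinj), ?_⟩
  ext x
  rcases Fin.eq_self_or_eq_succAbove v x with rfl | ⟨k, rfl⟩
  · rw [insP_at, h]
  · rw [insP_succAbove, Equiv.ofBijective_apply, hf]

lemma sA_val {N : ℕ} (v : Fin (N + 1)) (k : Fin N) :
    ((v.succAbove k : Fin (N + 1)) : ℕ) = if (k : ℕ) < v then (k : ℕ) else k + 1 := by
  unfold Fin.succAbove
  simp only [Fin.lt_def, Fin.val_castSucc]
  split_ifs <;> simp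

lemma chain {N : ℕ} (β : ℕ → ℕ) (j lo hi : ℕ) (hβ : ∀ x < N, β x = j ↔ lo ≤ x ∧ x ≤ hi)
    (p : Equiv.Perm (Fin N)) (hp : LE' N β p) (v : ℕ) (hv : v < N) (hvj : β v = j)
    (h : v ≤ (p ⟨v, hv⟩ : ℕ)) (w : ℕ) (hvw : v ≤ w) :
    ∀ (hw : w < N), β w = j → w ≤ (p ⟨w, hw⟩ : ℕ) := by
  induction w, hvw using Nat.le_induction with
  | base => intro _ _; exact h
  | succ w hvw ih =>
    intro hw hwj
    have h1 := (hβ _ hw).1 hwj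
    have h2 := (hβ _ hv).1 hvj
    have h3 : β w = j := (hβ _ (by omega)).2 (by omega)
    have h4 := ih (by omega) h3
    have h5 := hp ⟨w, by omega⟩ ⟨w + 1, hw⟩ (by simp [Fin.lt_def]) (by simp [h3, hwj])
    rw [Fin.lt_def] at h5
    omega

/-- maximal fixed point in block `j` -/
def MaxFix {N : ℕ} (β : ℕ → ℕ) (j : ℕ) (v : Fin N) (p : Equiv.Perm (Fin N)) : Prop :=
  β v = j ∧ p v = v ∧ ∀ w : Fin N, β w = j → p w = w → w ≤ v

section step
variable {N : ℕ} {β β' : ℕ → ℕ} {j lo hi : ℕ} (hlh : lo ≤ hi) (hhi : hi ≤ N)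
  (hβ : ∀ x < N + 1, β x = j ↔ lo ≤ x ∧ x ≤ hi)
  (hβ' : ∀ v, lo ≤ v → v ≤ hi → ∀ k < N, β' k = β (if k < v then k else k + 1))
include hlh hhi hβ hβ'

lemma blk'_iff (k : ℕ) (hk : k < N) : β' k = j ↔ lo ≤ k ∧ k < hi := by
  rw [hβ' hi hlh le_rfl k hk]
  split_ifs with h
  · rw [hβ k (by omega)]; omega
  · rw [hβ (k + 1) (by omega)]; omega

lemma step_exists (p : Equiv.Perm (Fin N)) (hp : LE' N β' p) :
    ∃ v : Fin (N + 1), LE' (N + 1) β (insP v p) ∧ MaxFix β j v (insP v p) := by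
  have hb' := blk'_iff hlh hhi hβ hβ'
  let Q : ℕ → Prop := fun v => lo ≤ v ∧ ∀ k : Fin N, β' k = j → (k : ℕ) < v → (p k : ℕ) < v
  have hQ0 : Q lo := ⟨le_rfl, fun k hk h => by
    have := (hb' k k.2).1 hk; omega⟩
  set v := Nat.findGreatest Q hi with hv
  have hvQ : Q v := Nat.findGreatest_spec hlh hQ0
  have hvhi : v ≤ hi := Nat.findGreatest_le hi
  have hvmax : ∀ w, w ≤ hi → Q w → w ≤ v := fun w hw h => Nat.le_findGreatest hw h
  have hR : ∀ k : Fin N, β' k = j → v ≤ (k : ℕ) → v ≤ (p k : ℕ) := by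
    intro k hk hvk
    have hk2 := (hb' k k.2).1 hk
    by_contra hcon
    push Not at hcon
    have : Q (v + 1) := by
      refine ⟨by have := hvQ.1; omega, fun i hi' hiv => ?_⟩
      by_cases h : (i : ℕ) < v
      · have := hvQ.2 i hi' h; omega
      · have hi2 : i ≤ k := by rw [Fin.le_def]; omega
        rcases hi2.eq_or_lt with h' | h'
        · rw [h']; omega
        · have := hp i k h' (by rw [hi', hk])
          rw [Fin.lt_def] at this; omega
    have := hvmax (v + 1) (by omega) this
    omega
  have hvN : v < N + 1 := by omega
  have hbv : β v = j := (hβ v hvN).2 ⟨hvQ.1, hvhi⟩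
  have hbk : ∀ k : Fin N, β (((⟨v, hvN⟩ : Fin (N + 1)).succAbove k : Fin (N + 1)) : ℕ) = β' k := by
    intro k
    rw [sA_val, hβ' v hvQ.1 hvhi k k.2]
  refine ⟨⟨v, hvN⟩, ?_, hbv, insP_at _ _, ?_⟩
  · intro a b hab hbab
    rcases Fin.eq_self_or_eq_succAbove (⟨v, hvN⟩ : Fin (N + 1)) a with rfl | ⟨a, rfl⟩
    · rcases Fin.eq_self_or_eq_succAbove (⟨v, hvN⟩ : Fin (N + 1)) b with rfl | ⟨b, rfl⟩
      · exact absurd hab (lt_irrefl _)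
      · rw [hbk] at hbab
        rw [insP_at, insP_succAbove]
        rw [Fin.lt_def, sA_val] at *
        have := hR b (by rw [← hbab]; exact hbv)
        simp only at *
        split_ifs at * <;> omega
    · rcases Fin.eq_self_or_eq_succAbove (⟨v, hvN⟩ : Fin (N + 1)) b with rfl | ⟨b, rfl⟩
      · rw [hbk] at hbab
        rw [insP_at, insP_succAbove]
        rw [Fin.lt_def, sA_val] at *
        have := hvQ.2 a (by rw [hbab]; exact hbv)
        simp only at *
        split_ifs at * <;> omega
      · rw [hbk, hbk] at hbab
        rw [insP_succAbove, insP_succAbove]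
        rw [Fin.succAbove_lt_succAbove_iff] at *
        exact hp a b hab hbab
  · intro w hw hpw
    by_contra hcon
    rcases Fin.eq_self_or_eq_succAbove (⟨v, hvN⟩ : Fin (N + 1)) w with rfl | ⟨k, rfl⟩
    · exact hcon le_rfl
    · rw [insP_succAbove] at hpw
      have hpk := Fin.succAbove_right_injective hpw
      have hwhi := ((hβ _ (Fin.is_lt _)).1 hw)
      rw [hbk] at hw
      rw [Fin.le_def, sA_val] at hcon
      rw [sA_val] at hwhi
      simp only at *
      have hkv : ¬ (k : ℕ) < v := by
        intro h; simp [h] at hcon; omega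
      simp only [hkv, if_false] at *
      have : Q (k + 1) := by
        refine ⟨by omega, fun i hij hik => ?_⟩
        have hi2 : i ≤ k := by rw [Fin.le_def]; omega
        rcases hi2.eq_or_lt with h' | h'
        · rw [h', hpk]; omega
        · have := hp i k h' (by rw [hij, hw])
          rw [Fin.lt_def, hpk] at this; omega
      have := hvmax _ (by omega) this
      omega

lemma step_unique_aux (p : Equiv.Perm (Fin N)) (v v' : Fin (N + 1)) (hvv : v < v')
    (h1 : LE' (N + 1) β (insP v p)) (h2 : MaxFix β j v (insP v p))
    (h1' : LE' (N + 1) β (insP v' p)) (h2' : MaxFix β j v' (insP v' p)) : False := by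
  rw [Fin.lt_def] at hvv
  have hv' := v'.2
  have hb := (hβ v v.2).1 h2.1
  have hb' := (hβ v' v'.2).1 h2'.1
  obtain ⟨k, hk⟩ : ∃ k : Fin N, (k : ℕ) + 1 = v' := ⟨⟨v' - 1, by omega⟩, by simp; omega⟩
  have e1 : v.succAbove k = v' := by
    apply Fin.ext
    rw [sA_val, if_neg (by omega)]; exact hk
  have e2 : ((v'.succAbove k : Fin (N + 1)) : ℕ) = k := by
    rw [sA_val, if_pos (by omega)]
  have h3 := h1' (v'.succAbove k) v' (by rw [Fin.lt_def, e2]; omega)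
    (by rw [h2'.1, e2]; exact (hβ _ (by omega)).2 (by omega))
  rw [insP_succAbove, insP_at, Fin.lt_def, sA_val] at h3
  have h4 : ((insP v p v' : Fin (N + 1)) : ℕ) ≤ v' := by
    conv_lhs => rw [← e1]
    rw [insP_succAbove, sA_val]
    split_ifs at * <;> omega
  have h5 := chain β j lo hi hβ (insP v p) h1 v v.2 h2.1
    (by have := insP_at v p; simp [this]) v' hvv.le v'.2 h2'.1
  have h6 : insP v p v' = v' := Fin.ext (le_antisymm h4 h5)
  have := h2.2.2 v' h2'.1 h6
  rw [Fin.le_def] at this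
  omega

lemma step_unique (p : Equiv.Perm (Fin N)) (v v' : Fin (N + 1))
    (h1 : LE' (N + 1) β (insP v p)) (h2 : MaxFix β j v (insP v p))
    (h1' : LE' (N + 1) β (insP v' p)) (h2' : MaxFix β j v' (insP v' p)) : v = v' := by
  rcases lt_trichotomy v v' with h | h | h
  · exact (step_unique_aux hlh hhi hβ hβ' p v v' h h1 h2 h1' h2').elim
  · exact h
  · exact (step_unique_aux hlh hhi hβ hβ' p v' v h h1' h2' h1 h2).elim

lemma LE'_remove (p : Equiv.Perm (Fin N)) (v : Fin (N + 1)) (hv : β v = j)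
    (h : LE' (N + 1) β (insP v p)) : LE' N β' p := by
  have hb := (hβ v v.2).1 hv
  intro a b hab hbab
  have := h (v.succAbove a) (v.succAbove b) (Fin.succAbove_lt_succAbove_iff.2 hab)
    (by rw [sA_val, sA_val, ← hβ' v hb.1 hb.2 a a.2, ← hβ' v hb.1 hb.2 b b.2, hbab])
  rwa [insP_succAbove, insP_succAbove, Fin.succAbove_lt_succAbove_iff] at this

lemma NF_ins (p : Equiv.Perm (Fin N)) (v : Fin (N + 1)) (hv : β v = j) :
    NF (N + 1) β (j + 1) (insP v p) ↔ NF N β' (j + 1) p := by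
  have hb := (hβ v v.2).1 hv
  constructor
  · intro h a ha hpa
    apply h (v.succAbove a) (by rw [sA_val, ← hβ' v hb.1 hb.2 a a.2]; exact ha)
    rw [insP_succAbove, hpa]
  · intro h a ha hpa
    rcases Fin.eq_self_or_eq_succAbove v a with rfl | ⟨a, rfl⟩
    · omega
    · rw [sA_val, ← hβ' v hb.1 hb.2 a a.2] at ha
      rw [insP_succAbove] at hpa
      exact h a ha (Fin.succAbove_right_injective hpa)

theorem cnt_step : cntP (N + 1) β (j + 1) = cntP (N + 1) β j + cntP N β' (j + 1) := by
  unfold cntP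
  rw [← Finset.card_filter_add_card_filter_not (s := Finset.univ.filter
    fun p : Equiv.Perm (Fin (N + 1)) => LE' (N + 1) β p ∧ NF (N + 1) β (j + 1) p)
    (fun p => ∀ a : Fin (N + 1), β a = j → p a ≠ a)]
  congr 1
  · congr 1
    ext p
    simp only [Finset.mem_filter, Finset.mem_univ, true_and, and_assoc]
    refine and_congr_right fun _ => ⟨fun h a ha => ?_, fun h => ⟨fun a ha => h a (by omega),
      fun a ha => h a (by omega)⟩⟩
    rcases ha.eq_or_lt with h' | h'
    · exact h.2 a h'.symm
    · exact h.1 a h'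
  · symm
    choose! g hg1 hg2 using step_exists hlh hhi hβ hβ'
    refine Finset.card_bij (fun p _ => insP (g p) p) ?_ ?_ ?_
    · intro p hp
      simp only [Finset.mem_filter, Finset.mem_univ, true_and] at *
      refine ⟨⟨hg1 p hp.1, (NF_ins hlh hhi hβ hβ' p _ (hg2 p hp.1).1).2 hp.2⟩, fun h => ?_⟩
      exact h _ (hg2 p hp.1).1 (insP_at _ _)
    · intro p hp p' hp' heq
      simp only [Finset.mem_filter, Finset.mem_univ, true_and] at *
      have h1 := hg2 p hp.1
      have h2 := hg2 p' hp'.1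
      have hv : g p = g p' := by
        apply le_antisymm
        · apply h2.2.2 _ h1.1
          rw [← heq]; exact h1.2.1
        · apply h1.2.2 _ h2.1
          rw [heq]; exact h2.2.1
      rw [hv] at heq
      exact insP_inj _ _ _ heq
    · intro p hp
      simp only [Finset.mem_filter, Finset.mem_univ, true_and] at hp
      obtain ⟨⟨hp1, hp2⟩, hp3⟩ := hp
      push Not at hp3
      have hne : (Finset.univ.filter fun a : Fin (N + 1) => β a = j ∧ p a = a).Nonempty := by
        obtain ⟨a, ha⟩ := hp3
        exact ⟨a, by simpa using ha⟩
      set v := Finset.max' _ hne with hv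
      have hvm := Finset.max'_mem _ hne
      rw [← hv] at hvm
      simp only [Finset.mem_filter, Finset.mem_univ, true_and] at hvm
      have hmax : MaxFix β j v p := by
        refine ⟨hvm.1, hvm.2, fun w h1 h2 => Finset.le_max' _ _ ?_⟩
        simp [h1, h2]
      clear_value v
      obtain ⟨p', hp'⟩ := exists_insP v p hvm.2
      rw [← hp'] at hp1 hp2 hmax
      have hL := LE'_remove hlh hhi hβ hβ' p' v hvm.1 hp1
      refine ⟨p', ?_, ?_⟩
      · simp only [Finset.mem_filter, Finset.mem_univ, true_and]
        exact ⟨hL, (NF_ins hlh hhi hβ hβ' p' v hvm.1).1 hp2⟩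
      · rw [step_unique hlh hhi hβ hβ' p' (g p') v (hg1 p' hL) (hg2 p' hL) hp1 hmax]
        exact hp'
end step
end sComb

section sBlk
lemma nsum_zero (l : ℕ) (m : Fin l → ℕ) : nsum l m 0 = 0 := by simp [nsum]

lemma nsum_succ (l : ℕ) (m : Fin l → ℕ) (j : Fin l) :
    nsum l m ((j : ℕ) + 1) = nsum l m j + m j := by
  unfold nsum
  have hmj : m j = ∑ t : Fin l, if t = j then m t else 0 := by simp
  rw [Finset.sum_filter, Finset.sum_filter, hmj, ← Finset.sum_add_distrib]
  apply Finset.sum_congr rfl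
  intro t _
  rcases lt_trichotomy (t : ℕ) j with h | h | h
  · have : t ≠ j := by rintro rfl; exact lt_irrefl _ h
    rw [if_pos (by omega), if_pos h, if_neg this, add_zero]
  · have : t = j := Fin.ext h
    subst this
    simp
  · have : t ≠ j := by rintro rfl; exact lt_irrefl _ h
    rw [if_neg (by omega), if_neg (by omega), if_neg this, add_zero]

lemma nsum_mono (l : ℕ) (m : Fin l → ℕ) : Monotone (nsum l m) := by
  intro a b hab
  unfold nsum
  apply Finset.sum_le_sum_of_subset
  intro t
  simp only [Finset.mem_filter, Finset.mem_univ, true_and]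
  omega

lemma nsum_top (l : ℕ) (m : Fin l → ℕ) (b : ℕ) (hb : l ≤ b) : nsum l m b = ∑ j, m j := by
  unfold nsum
  rw [Finset.filter_true_of_mem]
  intro t _
  have := t.2
  omega

lemma nsum_sub (l : ℕ) (m : Fin l → ℕ) (j : Fin l) (hj : 1 ≤ m j) (b : ℕ) :
    nsum l m b = nsum l (m - Pi.single j 1) b + if (j : ℕ) < b then 1 else 0 := by
  unfold nsum
  rw [Finset.sum_filter, Finset.sum_filter]
  have : (if (j : ℕ) < b then 1 else 0) = ∑ t : Fin l, if t = j then (if (t : ℕ) < b then 1 else 0) else 0 := by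
    rw [Finset.sum_ite_eq']; simp
  rw [this, ← Finset.sum_add_distrib]
  apply Finset.sum_congr rfl
  intro t _
  by_cases h : t = j
  · subst h
    simp only [Pi.sub_apply, Pi.single_eq_same, if_true]
    split_ifs <;> omega
  · simp [h]

lemma blockOf_eq (l : ℕ) (m : Fin l → ℕ) (x b : ℕ) (h1 : nsum l m b ≤ x) (h2 : x < nsum l m (b + 1)) :
    blockOf l m x = b := by
  unfold blockOf
  apply le_antisymm
  · exact Nat.sInf_le h2
  · apply le_csInf ⟨b, h2⟩
    intro c hc
    by_contra hlt
    have : nsum l m (c + 1) ≤ nsum l m b := nsum_mono l m (by omega)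
    have hc' : x < nsum l m (c + 1) := hc
    omega

lemma blockOf_spec (l : ℕ) (m : Fin l → ℕ) (x : ℕ) (hx : x < ∑ j, m j) :
    nsum l m (blockOf l m x) ≤ x ∧ x < nsum l m (blockOf l m x + 1) := by
  have hne : {j : ℕ | x < nsum l m (j + 1)}.Nonempty :=
    ⟨l, by rw [Set.mem_ofPred_eq, nsum_top l m _ (by omega)]; exact hx⟩
  have h2 : x < nsum l m (blockOf l m x + 1) := Nat.sInf_mem hne
  refine ⟨?_, h2⟩
  rcases hb : blockOf l m x with _ | c
  · rw [nsum_zero]; omega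
  · by_contra hlt
    have : blockOf l m x ≤ c := Nat.sInf_le (show x < nsum l m (c + 1) by omega)
    omega

lemma blockOf_iff (l : ℕ) (m : Fin l → ℕ) (x b : ℕ) (hx : x < ∑ j, m j) :
    blockOf l m x = b ↔ nsum l m b ≤ x ∧ x < nsum l m (b + 1) :=
  ⟨fun h => h ▸ blockOf_spec l m x hx, fun h => blockOf_eq l m x b h.1 h.2⟩

lemma blockOf_lt (l : ℕ) (m : Fin l → ℕ) (x : ℕ) (hx : x < ∑ j, m j) : blockOf l m x < l := by
  by_contra h
  have := (blockOf_spec l m x hx).1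
  rw [nsum_top l m _ (by omega)] at this
  omega

lemma sum_sub_single (l : ℕ) (m : Fin l → ℕ) (j : Fin l) (hj : 1 ≤ m j) :
    ∑ t, m t = ∑ t, (m - Pi.single j 1 : Fin l → ℕ) t + 1 := by
  have := nsum_sub l m j hj l
  rw [nsum_top _ _ _ le_rfl, nsum_top _ _ _ le_rfl, if_pos j.2] at this
  exact this

lemma cntB_step (l : ℕ) (m : Fin l → ℕ) (j : Fin l) (hj : 1 ≤ m j) :
    cntP (∑ t, m t) (blockOf l m) (j + 1) = cntP (∑ t, m t) (blockOf l m) j +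
      cntP (∑ t, (m - Pi.single j 1 : Fin l → ℕ) t) (blockOf l (m - Pi.single j 1)) (j + 1) := by
  have hs := sum_sub_single l m j hj
  have hns := nsum_succ l m j
  have hle : nsum l m ((j : ℕ) + 1) ≤ ∑ t, m t := by
    rw [← nsum_top l m l le_rfl]; exact nsum_mono l m j.2
  set N := ∑ t, (m - Pi.single j 1 : Fin l → ℕ) t with hN
  rw [hs]
  apply cnt_step (lo := nsum l m j) (hi := nsum l m (j + 1) - 1)
  · omega
  · omega
  · intro x hx
    rw [blockOf_iff l m x j (by omega)]
    omega
  · intro v hv1 hv2 k hk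
    have hspec := blockOf_spec l (m - Pi.single j 1) k hk
    symm
    set b := blockOf l (m - Pi.single j 1) k
    have e1 := nsum_sub l m j hj b
    have e2 := nsum_sub l m j hj (b + 1)
    have e3 := nsum_sub l m j hj j
    have e4 := nsum_sub l m j hj (j + 1)
    simp only [lt_irrefl, if_false, Nat.lt_succ_self, if_true] at e3 e4
    apply blockOf_eq
    all_goals
      rcases lt_trichotomy b j with hb | hb | hb
      · have : nsum l m (b + 1) ≤ nsum l m j := nsum_mono l m hb
        rw [if_neg (by omega)] at e1
        rw [if_neg (by omega)] at e2
        rw [if_pos (by omega)]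
        omega
      · rw [hb] at e1 e2 hspec ⊢
        simp only [lt_irrefl, if_false, Nat.lt_succ_self, if_true] at e1 e2
        split_ifs <;> omega
      · have : nsum l m (j + 1) ≤ nsum l m b := nsum_mono l m hb
        rw [if_pos (by omega)] at e1
        rw [if_pos (by omega)] at e2
        rw [if_neg (by omega)]
        omega

lemma cntB_eq (l : ℕ) (m : Fin l → ℕ) (j : Fin l) (hj : m j = 0) :
    cntP (∑ t, m t) (blockOf l m) (j + 1) = cntP (∑ t, m t) (blockOf l m) j := by
  unfold cntP
  congr 1
  ext p
  simp only [Finset.mem_filter, Finset.mem_univ, true_and]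
  refine and_congr_right fun _ => ⟨fun h a ha => h a ?_, fun h a ha => h a (by omega)⟩
  rcases ha.eq_or_lt with h' | h'
  · have := (blockOf_iff l m a j a.2).1 h'.symm
    rw [nsum_succ, hj] at this
    omega
  · exact h'

lemma derange_eq (l N : ℕ) (c : Fin l → ℕ) : posetDerangeCount l N c = cntP N (blockOf l c) 0 := by
  unfold posetDerangeCount cntP
  refine Finset.card_bij (fun p _ => p⁻¹) ?_ (fun _ _ _ _ h => inv_injective h) ?_
  · intro p hp
    simp only [Finset.mem_filter, Finset.mem_univ, true_and] at *
    refine ⟨fun a b hab hbl => ?_, fun a _ h => hp.2 a ?_⟩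
    · by_contra hcon
      have hne : p⁻¹ a ≠ p⁻¹ b := fun h => hab.ne (p⁻¹.injective h)
      have hlt : p⁻¹ b < p⁻¹ a := lt_of_le_of_ne (not_lt.1 hcon) hne.symm
      have := hp.1 _ _ hlt (by simpa using hbl.symm)
      simp at this
      exact absurd hab (not_lt.2 this.le)
    · rw [Equiv.Perm.inv_eq_iff_eq] at h; exact h.symm
  · intro p hp
    simp only [Finset.mem_filter, Finset.mem_univ, true_and] at hp
    refine ⟨p⁻¹, ?_, inv_inv p⟩
    simp only [Finset.mem_filter, Finset.mem_univ, true_and]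
    refine ⟨fun a b hab hbl => ?_, fun a h => hp.2 a (Nat.zero_le _) ?_⟩
    · by_contra hcon
      have hne : p⁻¹ a ≠ p⁻¹ b := fun h => hab.ne (p⁻¹.injective h)
      have hlt : p⁻¹ b < p⁻¹ a := lt_of_le_of_ne (not_lt.1 hcon) hne.symm
      have := hp.1 _ _ hlt hbl.symm
      simp at this
      exact absurd hab (not_lt.2 this.le)
    · rw [Equiv.Perm.inv_eq_iff_eq] at h; exact h.symm
end sBlk

section sWd
variable {K : Type} [Field K] {l : ℕ}

lemma count_ofFn' {n : ℕ} (f : Fin n → Fin l) (j : Fin l) :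
    (List.ofFn f).count j = (Finset.univ.filter fun i => f i = j).card := by
  rw [← Multiset.coe_count, ← Fin.univ_val_map, Multiset.count_map]
  rw [Finset.card_def, Finset.filter_val]
  congr 1
  apply Multiset.filter_congr
  intro x _
  exact eq_comm

lemma length_of_count (m : Fin l → ℕ) (w : List (Fin l)) (hw : ∀ j, w.count j = m j) :
    w.length = ∑ j, m j := by
  have h := Multiset.sum_count_eq_card (s := Finset.univ) (m := (w : Multiset (Fin l))) (by simp)
  simp only [Multiset.coe_count, Multiset.coe_card] at h
  rw [← h]
  exact Finset.sum_congr rfl fun j _ => hw j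

/-- words as lists -/
def wEquiv (n : ℕ) (m : Fin l → ℕ) (hmn : ∑ j, m j = n) :
    Words n l m ≃ {w : List (Fin l) | ∀ j, w.count j = m j} :=
  Equiv.ofBijective (fun w => ⟨List.ofFn w.1, fun j => by rw [count_ofFn', w.2 j]⟩) (by
    constructor
    · intro w w' h
      apply Subtype.ext
      exact List.ofFn_injective (congrArg Subtype.val h)
    · rintro ⟨L, hL⟩
      have hlen : L.length = n := by rw [length_of_count m L hL, hmn]
      subst hlen
      refine ⟨⟨fun i => L.get i, fun j => ?_⟩, ?_⟩
      · rw [← count_ofFn', List.ofFn_get, hL j]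
      · apply Subtype.ext
        exact List.ofFn_get L)

lemma wEquiv_val (n : ℕ) (m : Fin l → ℕ) (hmn : ∑ j, m j = n) (w : Words n l m) :
    (wEquiv n m hmn w).1 = List.ofFn w.1 := rfl

/-- basis -/
def wBasis (K : Type) [Field K] (n : ℕ) (m : Fin l → ℕ) (hmn : ∑ j, m j = n) :
    Module.Basis (Words n l m) K (grV K m) :=
  Module.Basis.ofRepr ((Finsupp.supportedEquivFinsupp
    {w : List (Fin l) | ∀ j, w.count j = m j}).trans
      (Finsupp.domLCongr (wEquiv n m hmn).symm))

lemma wBasis_apply (n : ℕ) (m : Fin l → ℕ) (hmn : ∑ j, m j = n) (w : Words n l m) :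
    ((wBasis K n m hmn w : grV K m) : LV K l) = Finsupp.single (List.ofFn w.1) 1 := by
  have : (wBasis K n m hmn w : grV K m) =
      (Finsupp.supportedEquivFinsupp (M := K) (R := K)
        {w : List (Fin l) | ∀ j, w.count j = m j}).symm (Finsupp.single (wEquiv n m hmn w) 1) := by
    refine (Module.Basis.apply_eq_iff (b := wBasis K n m hmn)).2 ?_
    show (Finsupp.domLCongr (R := K) (M := K) (wEquiv n m hmn).symm)
      (Finsupp.supportedEquivFinsupp (M := K) (R := K) _ _) = _
    erw [LinearEquiv.apply_symm_apply]
    rw [Finsupp.domLCongr_single, Equiv.symm_apply_apply]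
  rw [this, Finsupp.supportedEquivFinsupp_symm_single]
  rfl

lemma finrank_grV (n : ℕ) (m : Fin l → ℕ) (hmn : ∑ j, m j = n) :
    Module.finrank K (grV K m) = Fintype.card (Words n l m) :=
  Module.finrank_eq_card_basis (wBasis K n m hmn)

/-- block as a letter -/
def bf (l : ℕ) (m : Fin l → ℕ) (x : Fin (∑ j, m j)) : Fin l := ⟨blockOf l m x, blockOf_lt l m x x.2⟩

lemma bf_mono (m : Fin l → ℕ) : Monotone (bf l m) := by
  intro x y hxy
  show blockOf l m x ≤ blockOf l m y
  by_contra h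
  have h1 := (blockOf_spec l m x x.2).1
  have h2 := (blockOf_spec l m y y.2).2
  have h3 : nsum l m (blockOf l m y + 1) ≤ nsum l m (blockOf l m x) := nsum_mono l m (by omega)
  have : (x : ℕ) ≤ y := hxy
  omega

lemma bf_card (m : Fin l → ℕ) (j : Fin l) : (Finset.univ.filter fun x => bf l m x = j).card = m j := by
  have h : (Finset.univ.filter fun x => bf l m x = j).map Fin.valEmbedding =
      Finset.Ico (nsum l m j) (nsum l m (j + 1)) := by
    have hle : nsum l m ((j : ℕ) + 1) ≤ ∑ t, m t := by
      rw [← nsum_top l m l le_rfl]; exact nsum_mono l m j.2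
    ext x
    simp only [Finset.mem_map, Finset.mem_filter, Finset.mem_univ, true_and, Finset.mem_Ico,
      Fin.valEmbedding_apply]
    constructor
    · rintro ⟨a, ha, rfl⟩
      exact (blockOf_iff l m a j a.2).1 (congrArg Fin.val ha)
    · intro hx
      have hx' : x < ∑ t, m t := by omega
      exact ⟨⟨x, hx'⟩, Fin.ext ((blockOf_iff l m x j hx').2 hx), rfl⟩
  rw [← Finset.card_map Fin.valEmbedding, h, Nat.card_Ico, nsum_succ]
  omega

lemma bf_eq (m : Fin l → ℕ) (x y : Fin (∑ j, m j)) :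
    bf l m x = bf l m y ↔ blockOf l m x = blockOf l m y := by
  simp [bf]

lemma cntB_top (m : Fin l → ℕ) (s : ℕ) (hs : l ≤ s) :
    cntP (∑ j, m j) (blockOf l m) s = Fintype.card (Words (∑ j, m j) l m) := by
  unfold cntP
  rw [← Finset.card_univ]
  symm
  have key : ∀ w : Words (∑ j, m j) l m, w.1 ∘ Tuple.sort w.1 = bf l m := by
    intro w
    have hc : ∀ c, Nonempty ({a // bf l m a = c} ≃ {b // w.1 b = c}) := by
      intro c
      rw [← Fintype.card_eq, Fintype.card_subtype, Fintype.card_subtype, bf_card, w.2 c]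
    let σ := Equiv.ofFiberEquiv fun c => (hc c).some
    have hσ : w.1 ∘ σ = bf l m := by
      funext a
      exact Equiv.ofFiberEquiv_map (fun c => (hc c).some) a
    have := (Tuple.comp_sort_eq_comp_iff_monotone (f := w.1) (σ := σ)).2 (by rw [hσ]; exact bf_mono m)
    rw [← this, hσ]
  refine Finset.card_bij (fun w _ => Tuple.sort w.1) ?_ ?_ ?_
  · intro w _
    simp only [Finset.mem_filter, Finset.mem_univ, true_and]
    have h := (Tuple.eq_sort_iff (f := w.1) (σ := Tuple.sort w.1)).1 rfl
    refine ⟨fun a b hab hbl => h.2 a b hab ?_, fun a ha => ?_⟩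
    · have := (bf_eq m a b).2 hbl
      rw [← key w] at this
      exact this
    · have := blockOf_lt l m a a.2
      omega
  · intro w _ w' _ h
    apply Subtype.ext
    have h1 := key w
    have h2 := key w'
    rw [← h2, ← h] at h1
    funext x
    have := congrFun h1 ((Tuple.sort w.1)⁻¹ x)
    simpa using this
  · intro p hp
    simp only [Finset.mem_filter, Finset.mem_univ, true_and] at hp
    have hw : ∀ j, (Finset.univ.filter fun i => (bf l m ∘ ⇑(p⁻¹)) i = j).card = m j := by
      intro j
      rw [← bf_card m j]
      refine Finset.card_bij (fun x _ => p⁻¹ x) ?_ (fun _ _ _ _ h => p⁻¹.injective h) ?_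
      · intro a ha
        simpa using ha
      · intro b hb
        exact ⟨p b, by simpa using hb, by simp⟩
    refine ⟨⟨bf l m ∘ ⇑(p⁻¹), hw⟩, Finset.mem_univ _, ?_⟩
    symm
    rw [Tuple.eq_sort_iff]
    have e : (bf l m ∘ ⇑(p⁻¹)) ∘ ⇑p = bf l m := by funext x; simp
    constructor
    · rw [e]; exact bf_mono m
    · intro i j hij h
      exact hp.1 i j hij ((bf_eq m i j).1 (by simpa using h))

lemma finrank_Kers [Infinite K] (q : K) (hq : ∀ r, qInt q (r + 1) ≠ 0) (s : ℕ) (hs : s ≤ l) :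
    ∀ m : Fin l → ℕ, Module.finrank K (Kers q s m) = cntP (∑ j, m j) (blockOf l m) s := by
  induction hs using Nat.decreasingInduction with
  | self =>
    intro m
    have : Kers q l m = grV K m := by
      ext x
      rw [mem_Kers]
      exact ⟨fun h => h.1, fun h => ⟨h, fun k hk => absurd k.2 (by omega)⟩⟩
    rw [this, finrank_grV _ m rfl, cntB_top m l le_rfl]
  | of_succ i hi ih =>
    intro m
    let j : Fin l := ⟨i, hi⟩
    rcases Nat.eq_zero_or_pos (m j) with h0 | h0
    · have h1 := Kers_eq q j m h0
      have h2 := cntB_eq l m j h0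
      have h3 := ih m
      rw [show i = (j : ℕ) from rfl] at *
      rw [← h1, h3, h2]
    · have h1 := (cpK_rec q hq j m h0 0).2
      have h2 := cntB_step l m j h0
      have h3 := ih m
      have h4 := ih (m - Pi.single j 1)
      rw [show i = (j : ℕ) from rfl] at *
      omega

lemma finrank_Kers_zero [Infinite K] (q : K) (hq : ∀ r, qInt q (r + 1) ≠ 0) (m : Fin l → ℕ) :
    Module.finrank K (Kers q 0 m) = posetDerangeCount l (∑ j, m j) m := by
  rw [derange_eq, finrank_Kers q hq 0 (Nat.zero_le _)]
end sWd

section sMat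
variable {K : Type} [Field K] {l : ℕ} (q : K)

/-- Hecke generator on lists -/
def Gl (q : K) : ℕ → List (Fin l) → LV K l
  | 0, a :: b :: L => if b ≤ a then q • Finsupp.single (b :: a :: L) 1 else
      Finsupp.single (b :: a :: L) 1 + (q - 1) • Finsupp.single (a :: b :: L) 1
  | 0, _ => 0
  | _ + 1, [] => 0
  | k + 1, a :: L => opU K a (Gl q k L)

/-- Hecke generator -/
def gk (k : ℕ) : Module.End K (LV K l) := Finsupp.linearCombination K (Gl q k)

lemma gk_single (k : ℕ) (w : List (Fin l)) : gk q k (Finsupp.single w 1) = Gl q k w := by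
  simp [gk]

lemma gk_succ (k : ℕ) (a : Fin l) (v : LV K l) : gk q (k + 1) (opU K a v) = opU K a (gk q k v) := by
  have : gk q (k + 1) ∘ₗ opU K a = opU K a ∘ₗ gk q k := by
    apply LV_ext
    intro w
    simp only [LinearMap.comp_apply, opU_single, gk_single]
    rfl
  exact LinearMap.congr_fun this v

lemma gk_zero (a b : Fin l) (v : LV K l) : gk q 0 (opU K a (opU K b v)) =
    if b ≤ a then q • opU K b (opU K a v) else
      opU K b (opU K a v) + (q - 1) • opU K a (opU K b v) := by
  split_ifs with h
  · have : gk q 0 ∘ₗ opU K a ∘ₗ opU K b = q • (opU K b ∘ₗ opU K a) := by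
      apply LV_ext
      intro w
      simp only [LinearMap.comp_apply, LinearMap.smul_apply, opU_single, gk_single]
      simp [Gl, h]
    exact LinearMap.congr_fun this v
  · have : gk q 0 ∘ₗ opU K a ∘ₗ opU K b = opU K b ∘ₗ opU K a + (q - 1) • (opU K a ∘ₗ opU K b) := by
      apply LV_ext
      intro w
      simp only [LinearMap.comp_apply, LinearMap.smul_apply, LinearMap.add_apply, opU_single,
        gk_single]
      simp only [Gl, h, if_false]
    exact LinearMap.congr_fun this v

/-- products -/
def Ps (q : K) : ℕ → Module.End K (LV K l)
  | 0 => LinearMap.id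
  | k + 1 => Ps q k ∘ₗ gk q k

lemma Ps_succ (k : ℕ) (a : Fin l) (v : LV K l) :
    Ps q (k + 1) (opU K a v) = gk q 0 (opU K a (Ps q k v)) := by
  induction k generalizing v with
  | zero => rfl
  | succ k ih =>
    show Ps q (k + 1) (gk q (k + 1) (opU K a v)) = _
    rw [gk_succ, ih]
    rfl

lemma opA_one_cons (a : Fin l) (v : LV K l) :
    opA q 1 (opU K a v) = opU K a v + gk q 0 (opU K a (opA q 1 v)) := by
  simp only [opA_apply, Pi.one_apply, one_smul, map_sum, gk_zero, opD_opU, map_add, map_smul,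
    apply_ite (opU K _), map_zero, Finset.sum_add_distrib]
  have h1 : ∀ x : Fin l, (if x = a then opU K x v + (q - 1) • ∑ i, (if x < i then
      opU K x (opU K i (opD q i v)) else 0) else 0) =
      if x = a then opU K a v + (q - 1) • ∑ i, (if a < i then
      opU K a (opU K i (opD q i v)) else 0) else 0 := by
    intro x
    split_ifs with h
    · rw [h]
    · rfl
  rw [Finset.sum_congr rfl fun x _ => h1 x, Finset.sum_ite_eq' Finset.univ a]
  simp only [Finset.mem_univ, if_true]
  rw [add_left_comm]
  congr 1
  rw [Finset.smul_sum, ← Finset.sum_add_distrib]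
  apply Finset.sum_congr rfl
  intro i _
  by_cases h : i ≤ a
  · simp [h, not_lt.2 h]
  · simp [h, not_le.1 h]

lemma sum_Ps (w : List (Fin l)) :
    ∑ k ∈ Finset.range w.length, Ps q k (Finsupp.single w 1) = opA q 1 (Finsupp.single w 1) := by
  induction w with
  | nil => simp [opA_apply, opD_nil]
  | cons a L ih =>
    rw [← opU_single, opA_one_cons, ← ih, List.length_cons, Finset.sum_range_succ', add_comm]
    congr 1
    simp only [Ps_succ, map_sum]

/-- weights -/
def Xy (y : Fin l → K) : Module.End K (LV K l) :=
  Finsupp.linearCombination K (fun w => match w with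
    | [] => 0
    | a :: L => Finsupp.single (a :: L) (y a))

lemma Xy_cons (y : Fin l → K) (a : Fin l) (L : List (Fin l)) :
    Xy y (Finsupp.single (a :: L) 1) = y a • Finsupp.single (a :: L) 1 := by
  simp [Xy]

lemma Xy_opU (y : Fin l → K) (a : Fin l) (v : LV K l) :
    Xy y (opU K a v) = y a • opU K a v := by
  have : Xy y ∘ₗ opU K a = y a • opU K a := by
    apply LV_ext
    intro w
    simp only [LinearMap.comp_apply, LinearMap.smul_apply, opU_single, Xy_cons]
  exact LinearMap.congr_fun this v

lemma opA_eq (y : Fin l → K) (v : LV K l) : opA q y v = Xy y (opA q 1 v) := by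
  simp [opA_apply, map_sum, Xy_opU]

lemma Gl_ofFn (k : ℕ) : ∀ (n : ℕ) (h : k + 1 < n) (f : Fin n → Fin l), Gl q k (List.ofFn f) =
    if f ⟨k + 1, h⟩ ≤ f ⟨k, Nat.lt_of_succ_lt h⟩ then
      q • Finsupp.single (List.ofFn (f ∘ Equiv.swap ⟨k, Nat.lt_of_succ_lt h⟩ ⟨k + 1, h⟩)) 1
    else Finsupp.single (List.ofFn (f ∘ Equiv.swap ⟨k, Nat.lt_of_succ_lt h⟩ ⟨k + 1, h⟩)) 1 +
      (q - 1) • Finsupp.single (List.ofFn f) 1 := by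
  induction k with
  | zero =>
    intro n h f
    obtain ⟨n, rfl⟩ : ∃ n', n = n' + 2 := ⟨n - 2, by omega⟩
    have e1 : List.ofFn (f ∘ Equiv.swap ⟨0, Nat.lt_of_succ_lt h⟩ ⟨0 + 1, h⟩) =
        f ⟨1, h⟩ :: f ⟨0, by omega⟩ :: List.ofFn fun i : Fin n => f i.succ.succ := by
      rw [List.ofFn_succ, List.ofFn_succ]
      refine congrArg₂ List.cons ?_ (congrArg₂ List.cons ?_ ?_)
      · exact congrArg f (Equiv.swap_apply_left _ _)
      · exact congrArg f (Equiv.swap_apply_right _ _)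
      · congr 1
    have e2 : List.ofFn f =
        f ⟨0, by omega⟩ :: f ⟨1, h⟩ :: List.ofFn fun i : Fin n => f i.succ.succ := by
      rw [List.ofFn_succ, List.ofFn_succ]
      rfl
    rw [e1, e2]
    rfl
  | succ k ih =>
    intro n h f
    obtain ⟨n, rfl⟩ : ∃ n', n = n' + 1 := ⟨n - 1, by omega⟩
    have h' : k + 1 < n := by omega
    have e1 : List.ofFn (f ∘ Equiv.swap ⟨k + 1, Nat.lt_of_succ_lt h⟩ ⟨k + 1 + 1, h⟩) =
        f 0 :: List.ofFn ((fun i : Fin n => f i.succ) ∘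
          Equiv.swap ⟨k, Nat.lt_of_succ_lt h'⟩ ⟨k + 1, h'⟩) := by
      rw [List.ofFn_succ]
      refine congrArg₂ List.cons ?_ ?_
      · refine congrArg f ?_
        apply Equiv.swap_apply_of_ne_of_ne
        · intro hh; simpa using congrArg Fin.val hh
        · intro hh; simpa using congrArg Fin.val hh
      · congr 1
        funext i
        simp only [Function.comp_apply]
        congr 1
        have := (Fin.succ_injective n).swap_apply ⟨k, Nat.lt_of_succ_lt h'⟩ ⟨k + 1, h'⟩ i
        exact this
    have e2 : List.ofFn f = f 0 :: List.ofFn (fun i : Fin n => f i.succ) := List.ofFn_succ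
    rw [e1, e2]
    show opU K (f 0) (Gl q k _) = _
    rw [ih n h' (fun i : Fin n => f i.succ), apply_ite (opU K (f 0))]
    simp only [map_add, map_smul, opU_single]
    rfl

section rep
variable {n : ℕ} {m : Fin l → ℕ}

/-- row action -/
def Rep (M : Matrix (Words n l m) (Words n l m) K) (F : Module.End K (LV K l)) : Prop :=
  ∀ w, ∑ u, M w u • (Finsupp.single (List.ofFn u.1) 1 : LV K l) = F (Finsupp.single (List.ofFn w.1) 1)

lemma Rep_mul {M N : Matrix (Words n l m) (Words n l m) K} {F G : Module.End K (LV K l)}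
    (h1 : Rep M F) (h2 : Rep N G) : Rep (M * N) (G ∘ₗ F) := by
  intro w
  rw [LinearMap.comp_apply, ← h1 w, map_sum]
  simp only [map_smul, ← h2 _, Matrix.mul_apply, Finset.sum_smul, Finset.smul_sum, smul_smul]
  rw [Finset.sum_comm]

lemma Rep_one : Rep (1 : Matrix (Words n l m) (Words n l m) K) LinearMap.id := by
  intro w
  simp [Matrix.one_apply]

lemma Rep_sum {ι : Type} (s : Finset ι) (M : ι → Matrix (Words n l m) (Words n l m) K)
    (F : ι → Module.End K (LV K l)) (h : ∀ i ∈ s, Rep (M i) (F i)) :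
    Rep (∑ i ∈ s, M i) (∑ i ∈ s, F i) := by
  intro w
  simp only [Matrix.sum_apply, LinearMap.sum_apply, Finset.sum_smul]
  rw [Finset.sum_comm]
  exact Finset.sum_congr rfl fun i hi => h i hi w

lemma Rep_gen (k : ℕ) (hk : k + 1 < n) : Rep (genMatW n l m q k) (gk q k) := by
  intro w
  rw [gk_single, Gl_ofFn q k n hk]
  let w' : Words n l m := ⟨w.1 ∘ Equiv.swap ⟨k, Nat.lt_of_succ_lt hk⟩ ⟨k + 1, hk⟩, fun j => by
    rw [← w.2 j]
    refine Finset.card_bij (fun x _ => Equiv.swap ⟨k, Nat.lt_of_succ_lt hk⟩ ⟨k + 1, hk⟩ x) ?_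
      (fun _ _ _ _ h => Equiv.injective _ h) ?_
    · intro a ha
      simpa using ha
    · intro b hb
      exact ⟨Equiv.swap ⟨k, Nat.lt_of_succ_lt hk⟩ ⟨k + 1, hk⟩ b, by simpa using hb, by simp⟩⟩
  have hw : ∀ u : Words n l m,
      u.1 = w.1 ∘ Equiv.swap ⟨k, Nat.lt_of_succ_lt hk⟩ ⟨k + 1, hk⟩ ↔ u = w' :=
    fun u => ⟨fun h => Subtype.ext h, fun h => congrArg Subtype.val h⟩
  simp only [genMatW, hk, dif_pos, hw]
  split_ifs with h
  · simp only [ite_smul, zero_smul, Finset.sum_ite_eq', Finset.mem_univ, if_true]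
    rfl
  · simp only [add_smul, Finset.sum_add_distrib, ite_smul, zero_smul, Finset.sum_ite_eq',
      Finset.mem_univ, if_true, one_smul]
    rfl

lemma Rep_prod (k : ℕ) (hk : k < n ∨ k = 0) : Rep (prodGenW n l m q k) (Ps q k) := by
  induction k with
  | zero => exact Rep_one
  | succ k ih =>
    have hk' : k + 1 < n := by omega
    exact Rep_mul (Rep_gen q k hk') (ih (by omega))

/-- diagonal weights -/
def Yd (n : ℕ) (m : Fin l → ℕ) (y : Fin l → K) : Matrix (Words n l m) (Words n l m) K := fun w u =>
  if u = w then (if h : 0 < n then y (w.1 ⟨0, h⟩) else 0) else 0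

lemma Rep_Yd (y : Fin l → K) : Rep (Yd n m y) (Xy y) := by
  intro w
  simp only [Yd, ite_smul, zero_smul, Finset.sum_ite_eq', Finset.mem_univ, if_true]
  rcases n with _ | n
  · simp [Xy]
  · rw [dif_pos (Nat.succ_pos n)]
    rw [List.ofFn_succ, Xy_cons]
    rfl

/-- library matrix with raw weights -/
def MY (n : ℕ) (m : Fin l → ℕ) (q : K) (y : Fin l → K) : Matrix (Words n l m) (Words n l m) K :=
  (∑ k ∈ Finset.range n, prodGenW n l m q k) * Yd n m y

lemma Rep_MY (y : Fin l → K) : Rep (MY n m q y) (opA q y) := by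
  have h1 : Rep (∑ k ∈ Finset.range n, prodGenW n l m q k) (∑ k ∈ Finset.range n, Ps q k) :=
    Rep_sum _ _ _ fun k hk => Rep_prod q k (Or.inl (Finset.mem_range.1 hk))
  intro w
  rw [opA_eq, ← sum_Ps, List.length_ofFn]
  have := Rep_mul h1 (Rep_Yd y) w
  rw [LinearMap.comp_apply, LinearMap.sum_apply] at this
  exact this
end rep

lemma cpGen_basis {ι V : Type} [Fintype ι] [DecidableEq ι] [AddCommGroup V] [Module K V]
    (p : Submodule K V) (fd : FiniteDimensional K p) (a : Module.End K V)
    (h : ∀ x ∈ p, a x ∈ p) (b : Module.Basis ι K p) (M : Matrix ι ι K)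
    (hM : ∀ w, ∑ u, M w u • (b u : V) = a (b w)) : M.charpoly = cpGen p fd a h := by
  have : LinearMap.toMatrix b b (a.restrict h) = M.transpose := by
    ext u w
    rw [LinearMap.toMatrix_apply]
    have h1 : (a.restrict h) (b w) = ∑ u, M w u • b u := by
      apply Subtype.ext
      rw [LinearMap.coe_restrict_apply, ← hM]
      simp
    rw [h1]
    simp [Finsupp.single_apply]
  rw [cpGen, ← LinearMap.charpoly_toMatrix _ b, this, Matrix.charpoly_transpose]

lemma cpGen_congr {V : Type} [AddCommGroup V] [Module K V]
    (p p' : Submodule K V) (hp : p = p') (fd : FiniteDimensional K p) (fd' : FiniteDimensional K p')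
    (a : Module.End K V) (h : ∀ x ∈ p, a x ∈ p) (h' : ∀ x ∈ p', a x ∈ p') :
    cpGen p fd a h = cpGen p' fd' a h' := by
  subst hp; rfl

lemma MY_charpoly (n : ℕ) (m : Fin l → ℕ) (hmn : ∑ j, m j = n) (y : Fin l → K) :
    (MY n m q y).charpoly = cpK q l m y := by
  have hK : grV K m = Kers q l m := by
    ext x
    rw [mem_Kers]
    exact ⟨fun h => ⟨h, fun k hk => absurd k.2 (by omega)⟩, fun h => h.1⟩
  have e : cpK q l m y = cpGen (V := LV K l) (grV K m) (grV_fin m) (opA q y) (opA_mem_gr q m y) :=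
    (cpGen_congr (V := LV K l) (grV K m) _ hK (grV_fin m) _ (opA q y) (opA_mem_gr q m y) _).symm
  rw [e]
  refine cpGen_basis (V := LV K l) (grV K m) (grV_fin m) (opA q y) (opA_mem_gr q m y)
    (wBasis K n m hmn) _ ?_
  intro w
  simp only [wBasis_apply]
  exact Rep_MY q y w

theorem MY_charpoly_prod [Infinite K] (hq : ∀ r, qInt q (r + 1) ≠ 0) (n : ℕ) (m : Fin l → ℕ)
    (hmn : ∑ j, m j = n) (y : Fin l → K) :
    (MY n m q y).charpoly = ∏ a : (∀ j : Fin l, Fin (m j + 1)),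
        (Polynomial.X - Polynomial.C (lam q y fun j => (a j : ℕ))) ^
          posetDerangeCount l (n - ∑ j, (a j : ℕ)) (fun j => m j - (a j : ℕ)) := by
  rw [MY_charpoly q n m hmn, cpK_prod q hq l le_rfl]
  symm
  refine Finset.prod_bij (fun a _ => fun j => (a j : ℕ)) ?_ ?_ ?_ ?_
  · intro a _
    simp only [idx, Finset.mem_filter, Finset.mem_Iic]
    exact ⟨fun j => Nat.lt_succ_iff.1 (a j).2, fun k hk => absurd k.2 (by omega)⟩
  · intro a _ b _ h
    funext j
    exact Fin.ext (congrFun h j)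
  · intro b hb
    simp only [idx, Finset.mem_filter, Finset.mem_Iic] at hb
    exact ⟨fun j => ⟨b j, Nat.lt_succ_iff.2 (hb.1 j)⟩, Finset.mem_univ _, rfl⟩
  · intro a _
    congr 1
    rw [finrank_Kers_zero q hq]
    have : n - ∑ j, (a j : ℕ) = ∑ j, (m - fun j => (a j : ℕ)) j := by
      rw [← hmn]
      simp only [Pi.sub_apply]
      rw [Finset.sum_tsub_distrib]
      intro j _
      exact Nat.lt_succ_iff.1 (a j).2
    rw [this]
    rfl
end sMat

section sFin
/-- polynomial functions -/
def IsPF (f : ℂ → ℂ) : Prop := ∃ p : Polynomial ℂ, ∀ q, f q = p.eval q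

lemma IsPF.const (c : ℂ) : IsPF fun _ => c := ⟨Polynomial.C c, by simp⟩
lemma IsPF.var : IsPF fun q => q := ⟨Polynomial.X, by simp⟩
lemma IsPF.plus {f g : ℂ → ℂ} (hf : IsPF f) (hg : IsPF g) : IsPF fun q => f q + g q := by
  obtain ⟨a, ha⟩ := hf
  obtain ⟨b, hb⟩ := hg
  exact ⟨a + b, by simp [ha, hb]⟩
lemma IsPF.times {f g : ℂ → ℂ} (hf : IsPF f) (hg : IsPF g) : IsPF fun q => f q * g q := by
  obtain ⟨a, ha⟩ := hf
  obtain ⟨b, hb⟩ := hg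
  exact ⟨a * b, by simp [ha, hb]⟩
lemma IsPF.minus {f g : ℂ → ℂ} (hf : IsPF f) (hg : IsPF g) : IsPF fun q => f q - g q := by
  obtain ⟨a, ha⟩ := hf
  obtain ⟨b, hb⟩ := hg
  exact ⟨a - b, by simp [ha, hb]⟩
lemma IsPF.power {f : ℂ → ℂ} (hf : IsPF f) (k : ℕ) : IsPF fun q => f q ^ k := by
  obtain ⟨a, ha⟩ := hf
  exact ⟨a ^ k, by simp [ha]⟩
lemma IsPF.sum {ι : Type} (s : Finset ι) {f : ι → ℂ → ℂ} (hf : ∀ i ∈ s, IsPF (f i)) :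
    IsPF fun q => ∑ i ∈ s, f i q := by
  choose! p hp using hf
  refine ⟨∑ i ∈ s, p i, fun q => ?_⟩
  rw [Polynomial.eval_finsetSum]
  exact Finset.sum_congr rfl fun i hi => hp i hi q
lemma IsPF.prod {ι : Type} (s : Finset ι) {f : ι → ℂ → ℂ} (hf : ∀ i ∈ s, IsPF (f i)) :
    IsPF fun q => ∏ i ∈ s, f i q := by
  choose! p hp using hf
  refine ⟨∏ i ∈ s, p i, fun q => ?_⟩
  rw [Polynomial.eval_prod]
  exact Finset.prod_congr rfl fun i hi => hp i hi q

lemma IsPF.det {ι : Type} [Fintype ι] [DecidableEq ι] {M : ℂ → Matrix ι ι ℂ}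
    (h : ∀ i j, IsPF fun q => M q i j) : IsPF fun q => (M q).det := by
  simp only [Matrix.det_apply']
  apply IsPF.sum
  intro σ _
  apply IsPF.times (IsPF.const _)
  exact IsPF.prod _ fun i _ => h _ _

lemma PF_ext {f g : ℂ → ℂ} (hf : IsPF f) (hg : IsPF g) (h : ∀ k : ℕ, f k = g k) (q : ℂ) :
    f q = g q := by
  obtain ⟨a, ha⟩ := hf
  obtain ⟨b, hb⟩ := hg
  have : a = b := by
    apply Polynomial.eq_of_infinite_eval_eq
    apply Set.Infinite.mono (s := Set.range (fun k : ℕ => (k : ℂ)))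
    · rintro _ ⟨k, rfl⟩
      show a.eval (k : ℂ) = b.eval (k : ℂ)
      rw [← ha, ← hb, h]
    · exact Set.infinite_range_of_injective Nat.cast_injective
  rw [ha, hb, this]

lemma PF_mul {ι : Type} [Fintype ι] {M N : ℂ → Matrix ι ι ℂ}
    (h : ∀ i j, IsPF fun q => M q i j) (h' : ∀ i j, IsPF fun q => N q i j) (i j : ι) :
    IsPF fun q => (M q * N q) i j := by
  simp only [Matrix.mul_apply]
  exact IsPF.sum _ fun k _ => (h i k).times (h' k j)

variable {n l : ℕ} {m : Fin l → ℕ}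

lemma PF_gen (k : ℕ) (w u : Words n l m) : IsPF fun q => genMatW n l m q k w u := by
  unfold genMatW
  split_ifs
  · exact IsPF.var
  · exact IsPF.const 0
  · exact (IsPF.const 1).plus (IsPF.var.minus (IsPF.const 1))
  · exact (IsPF.const 1).plus (IsPF.const 0)
  · exact (IsPF.const 0).plus (IsPF.var.minus (IsPF.const 1))
  · exact (IsPF.const 0).plus (IsPF.const 0)
  · exact IsPF.const 0

lemma PF_prod (k : ℕ) (w u : Words n l m) : IsPF fun q => prodGenW n l m q k w u := by
  induction k generalizing w u with
  | zero => exact IsPF.const ((1 : Matrix (Words n l m) (Words n l m) ℂ) w u)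
  | succ k ih => exact PF_mul (fun i j => PF_gen k i j) (fun i j => ih i j) w u

lemma PF_MY (y : Fin l → ℂ) (w u : Words n l m) : IsPF fun q => MY n m q y w u := by
  apply PF_mul
  · intro i j
    simp only [Matrix.sum_apply]
    exact IsPF.sum _ fun k _ => PF_prod k i j
  · intro i j
    exact IsPF.const (Yd n m y i j)

lemma PF_lam (y : Fin l → ℂ) (a : Fin l → ℕ) : IsPF fun q => lam q y a := by
  unfold lam
  refine IsPF.sum _ fun j _ => (IsPF.const _).times ((IsPF.var.power _).times ?_)
  unfold qInt
  exact IsPF.sum _ fun k _ => IsPF.var.power _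

lemma qInt_nat (k r : ℕ) : qInt (k : ℂ) (r + 1) ≠ 0 := by
  unfold qInt
  have : ∑ i ∈ Finset.range (r + 1), (k : ℂ) ^ i = ((∑ i ∈ Finset.range (r + 1), k ^ i : ℕ) : ℂ) := by
    push_cast; rfl
  rw [this, Nat.cast_ne_zero, Finset.sum_range_succ']
  simp

theorem MY_general (q : ℂ) (hmn : ∑ j, m j = n) (y : Fin l → ℂ) :
    (MY n m q y).charpoly = ∏ a : (∀ j : Fin l, Fin (m j + 1)),
        (Polynomial.X - Polynomial.C (lam q y fun j => (a j : ℕ))) ^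
          posetDerangeCount l (n - ∑ j, (a j : ℕ)) (fun j => m j - (a j : ℕ)) := by
  apply Polynomial.funext
  intro t
  revert q
  apply PF_ext
  · simp only [Matrix.eval_charpoly]
    apply IsPF.det
    intro i j
    simp only [Matrix.sub_apply]
    exact (IsPF.const _).minus (PF_MY y i j)
  · simp only [Polynomial.eval_prod, Polynomial.eval_pow, Polynomial.eval_sub, Polynomial.eval_X,
      Polynomial.eval_C]
    exact IsPF.prod _ fun a _ => ((IsPF.const _).minus (PF_lam y _)).power _
  · intro k
    rw [MY_charpoly_prod (k : ℂ) (qInt_nat k) n m hmn y]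

end sFin

/-- For `q ≠ 0` and a composition `m` of `n` with positive parts, the
characteristic polynomial of the transition matrix of `T_{W_m}(q,x̄)` is the product, over
all weak compositions `a` with `a_j ≤ m_j` (equivalently, all upper sets `S` of `P_m`), of
`(t - λ_a(q,x̄))^{d_{P_m∖S}}`, where `P_m∖S` is the union of chains of sizes `m_j - a_j`. -/
theorem qTsetlin_words_charpoly (n l : ℕ) (q : ℂ) (hq : q ≠ 0) (m : Fin l → ℕ)
    (hm : ∀ j, 1 ≤ m j) (hmn : ∑ j, m j = n) (xb : Fin l → ℂ) :
    Matrix.charpoly (TWm n l m q xb) =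
      ∏ a : (∀ j : Fin l, Fin (m j + 1)),
        (Polynomial.X - Polynomial.C (lambdaA n l m q xb fun j => (a j : ℕ))) ^
          posetDerangeCount l (n - ∑ j, (a j : ℕ)) (fun j => m j - (a j : ℕ)) := by
  let y : Fin l → ℂ := fun j => xb j /
    (q ^ (∑ t ∈ Finset.univ.filter fun t : Fin l => j < t, m t) * qInt q (m j))
  have h1 : TWm n l m q xb = MY n m q y := rfl
  have h2 : ∀ a, lambdaA n l m q xb a = lam q y a := by
    intro a
    unfold lambdaA lam
    refine Finset.sum_congr rfl fun j _ => ?_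
    have : n - nsum l m ((j : ℕ) + 1) = ∑ t ∈ Finset.univ.filter fun t : Fin l => j < t, m t := by
      rw [← hmn]
      have h := Finset.sum_filter_add_sum_filter_not Finset.univ
        (fun t : Fin l => (t : ℕ) < (j : ℕ) + 1) m
      have h' : (Finset.univ.filter fun t : Fin l => ¬ (t : ℕ) < (j : ℕ) + 1) =
          Finset.univ.filter fun t : Fin l => j < t := by
        ext t
        simp only [Finset.mem_filter, Finset.mem_univ, true_and, Fin.lt_def]
        omega
      rw [h'] at h
      unfold nsum
      omega
    rw [this]
    simp only [y]
    ring
  rw [h1, MY_general q hmn y]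
  refine Finset.prod_congr rfl fun a _ => ?_
  rw [h2]

end QTsetlin
end
end

section
/- Let M be an ℓ×ℓ matrix with entries in the field ℂ(q) of rational functions in one variable q, let ξ_1,…,ξ_j ∈ ℂ(q) be pairwise distinct, and let m_1,…,m_j be nonnegative integers. Suppose: (1) for infinitely many complex numbers q_0, all entries of M and all ξ_i are defined at q_0 and the evaluated matrix M(q_0) satisfies ∏_{i=1}^j ( M(q_0) − ξ_i(q_0)·Id ) = 0; and (2) all entries of M and all ξ_i are defined at q_0 = 1, the values ξ_1(1),…,ξ_j(1) are pairwise distinct, and the characteristic polynomial of M(1) equals ∏_{i=1}^j (t − ξ_i(1))^{m_i}. Then the characteristic polynomial of M over ℂ(q) equals ∏_{i=1}^j (t − ξ_i)^{m_i}. -/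
/-!
STATEMENT 17: the specialization lemma for characteristic polynomials of matrices over
the field ℂ(q) of rational functions.
-/

open scoped Classical

noncomputable section

namespace QTsetlin

/-- Entrywise evaluation at `q₀ ∈ ℂ` of a matrix with entries in `ℂ(q)`. -/
def evalMat {l : ℕ} (q₀ : ℂ) (M : Matrix (Fin l) (Fin l) (RatFunc ℂ)) :
    Matrix (Fin l) (Fin l) ℂ :=
  fun a b => (M a b).eval (RingHom.id ℂ) q₀

/-- Rational functions defined at `q₀`. -/
def regAt (q₀ : ℂ) : Subring (RatFunc ℂ) where
  carrier := {f | Polynomial.eval q₀ f.denom ≠ 0}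
  mul_mem' {a b} ha hb h := by
    have := Polynomial.eval_eq_zero_of_dvd_of_eval_eq_zero (RatFunc.denom_mul_dvd a b) h
    rw [Polynomial.eval_mul] at this
    exact (mul_ne_zero ha hb) this
  add_mem' {a b} ha hb h := by
    have := Polynomial.eval_eq_zero_of_dvd_of_eval_eq_zero (RatFunc.denom_add_dvd a b) h
    rw [Polynomial.eval_mul] at this
    exact (mul_ne_zero ha hb) this
  one_mem' := by simp
  zero_mem' := by simp
  neg_mem' {a} ha h := by
    have e : -a = RatFunc.C (-1) * a := by simp
    rw [e] at h
    have := Polynomial.eval_eq_zero_of_dvd_of_eval_eq_zero (RatFunc.denom_mul_dvd _ _) h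
    rw [Polynomial.eval_mul, RatFunc.denom_C] at this
    simp at this
    exact ha this

/-- Evaluation as a ring homomorphism. -/
def evHom (q₀ : ℂ) : regAt q₀ →+* ℂ where
  toFun f := (f : RatFunc ℂ).eval (RingHom.id ℂ) q₀
  map_one' := by simp
  map_zero' := by simp
  map_mul' a b := by
    have ha := a.2
    have hb := b.2
    exact RatFunc.eval_mul (RingHom.id ℂ) q₀ ha hb
  map_add' a b := by
    have ha := a.2
    have hb := b.2
    exact RatFunc.eval_add (RingHom.id ℂ) q₀ ha hb

theorem charpoly_dvd_pow {K : Type*} [Field K] {l : ℕ} (M : Matrix (Fin l) (Fin l) K)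
    (p : Polynomial K) (hp : Polynomial.aeval M p = 0) : M.charpoly ∣ p ^ l := by
  have key : ∀ p : Polynomial K, M.charmatrix ∣
      Matrix.scalar (Fin l) p - Polynomial.C.mapMatrix (Polynomial.aeval M p) := by
    intro p
    induction p using Polynomial.induction_on' with
    | add p q hp hq =>
      have := dvd_add hp hq
      rw [map_add, map_add, map_add]
      convert this using 1
      abel
    | monomial n a =>
      have hc : Commute (Matrix.scalar (Fin l) (Polynomial.X : Polynomial K))
          (Polynomial.C.mapMatrix M) :=
        Matrix.scalar_commute _ (fun r => Commute.all _ _) _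
      have h := hc.sub_dvd_pow_sub_pow n
      have h2 := h.mul_right (Matrix.scalar (Fin l) (Polynomial.C a))
      have e : Matrix.scalar (Fin l) (Polynomial.X : Polynomial K) -
          (Polynomial.C.mapMatrix M) = M.charmatrix := rfl
      rw [e] at h2
      convert h2 using 1
      rw [sub_mul, ← map_pow, ← map_mul, Polynomial.aeval_monomial, map_mul, map_pow,
        mul_comm, Polynomial.C_mul_X_pow_eq_monomial]
      congr 1
      have e2 : Polynomial.C.mapMatrix (algebraMap K (Matrix (Fin l) (Fin l) K) a)
          = Matrix.scalar (Fin l) (Polynomial.C a) := by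
        ext i k : 2
        simp [Matrix.algebraMap_matrix_apply, Matrix.diagonal_apply, apply_ite]
      rw [e2]
      exact (Matrix.scalar_commute _ (fun r => Commute.all _ _) _).eq
  obtain ⟨Q, hQ⟩ := key p
  rw [hp, map_zero, sub_zero] at hQ
  have := congrArg Matrix.det hQ
  rw [Matrix.det_mul] at this
  refine ⟨Q.det, ?_⟩
  rw [Matrix.charpoly, ← this]
  simp

theorem charpoly_eq_of_annihilate {K : Type*} [Field K] {l j : ℕ}
    (M : Matrix (Fin l) (Fin l) K) (ξ : Fin j → K) (hξ : Function.Injective ξ)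
    (h : Polynomial.aeval M (∏ i, (Polynomial.X - Polynomial.C (ξ i))) = 0) :
    ∃ k : Fin j → ℕ, M.charpoly = ∏ i, (Polynomial.X - Polynomial.C (ξ i)) ^ k i := by
  have hd := charpoly_dvd_pow M _ h
  have hm : (∏ i, (Polynomial.X - Polynomial.C (ξ i))).Monic :=
    Polynomial.monic_prod_of_monic _ _ fun i _ => Polynomial.monic_X_sub_C _
  have hs : M.charpoly.Splits := by
    refine Polynomial.Splits.of_dvd ?_ (hm.pow l).ne_zero hd
    exact (Polynomial.Splits.prod fun i _ => Polynomial.Splits.X_sub_C _).pow _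
  have hr : ∀ x ∈ M.charpoly.roots, x ∈ Finset.univ.image ξ := by
    intro x hx
    have h0 := Polynomial.eval_eq_zero_of_dvd_of_eval_eq_zero hd
      (Polynomial.isRoot_of_mem_roots hx)
    rw [Polynomial.eval_pow] at h0
    have h1 := eq_zero_of_pow_eq_zero h0
    rw [Polynomial.eval_prod, Finset.prod_eq_zero_iff] at h1
    obtain ⟨i, _, hi⟩ := h1
    simp [sub_eq_zero] at hi
    simp [hi]
  refine ⟨fun i => M.charpoly.roots.count (ξ i), ?_⟩
  conv_lhs => rw [hs.eq_prod_roots_of_monic M.charpoly_monic]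
  rw [Finset.prod_multiset_map_count]
  rw [Finset.prod_subset (s₂ := Finset.univ.image ξ)]
  · rw [Finset.prod_image (fun a _ b _ h => hξ h)]
  · intro x hx
    exact hr x (Multiset.mem_toFinset.1 hx)
  · intro x _ hx
    rw [Multiset.count_eq_zero_of_notMem (fun h => hx (Multiset.mem_toFinset.2 h)), pow_zero]

theorem exps_eq {j : ℕ} (x : Fin j → ℂ) (hx : Function.Injective x) (k m : Fin j → ℕ)
    (h : ∏ i, (Polynomial.X - Polynomial.C (x i)) ^ k i =
      ∏ i, (Polynomial.X - Polynomial.C (x i)) ^ m i) : k = m := by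
  have key : ∀ k : Fin j → ℕ, ∀ i,
      (∏ i, (Polynomial.X - Polynomial.C (x i)) ^ k i).roots.count (x i) = k i := by
    intro k i
    rw [Polynomial.roots_prod _ _ (Finset.prod_ne_zero_iff.2 fun i _ =>
      pow_ne_zero _ (Polynomial.X_sub_C_ne_zero _))]
    rw [Multiset.count_bind]
    simp [Polynomial.roots_pow, Polynomial.roots_X_sub_C, Multiset.count_singleton, hx.eq_iff]
    rw [List.sum_ofFn]
    simp
  funext i
  rw [← key k i, ← key m i, h]

theorem annihilate_of_infinite {l j : ℕ} (M : Matrix (Fin l) (Fin l) (RatFunc ℂ))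
    (ξ : Fin j → RatFunc ℂ)
    (h1 : {q₀ : ℂ |
      (∀ a b : Fin l, Polynomial.eval q₀ (M a b).denom ≠ 0) ∧
      (∀ i : Fin j, Polynomial.eval q₀ (ξ i).denom ≠ 0) ∧
      ((List.finRange j).map fun i =>
          evalMat q₀ M -
            (ξ i).eval (RingHom.id ℂ) q₀ • (1 : Matrix (Fin l) (Fin l) ℂ)).prod = 0
      }.Infinite) :
    Polynomial.aeval M (∏ i, (Polynomial.X - Polynomial.C (ξ i))) = 0 := by
  have e0 : Polynomial.aeval M (∏ i, (Polynomial.X - Polynomial.C (ξ i))) =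
      ((List.finRange j).map fun i => M - ξ i • (1 : Matrix (Fin l) (Fin l) (RatFunc ℂ))).prod := by
    rw [← List.prod_ofFn, map_list_prod, List.ofFn_eq_map, List.map_map]
    congr 2
    funext i
    simp [Algebra.algebraMap_eq_smul_one]
  rw [e0]
  ext a b
  rw [Matrix.zero_apply, ← RatFunc.num_eq_zero_iff]
  refine Polynomial.eq_zero_of_infinite_isRoot _ (h1.mono ?_)
  rintro q ⟨hM, hx, hp⟩
  let M' : Matrix (Fin l) (Fin l) (regAt q) := fun a b => ⟨M a b, hM a b⟩
  let x' : Fin j → regAt q := fun i => ⟨ξ i, hx i⟩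
  have f1 : ∀ a b, (M' a b : RatFunc ℂ) = M a b := fun _ _ => rfl
  have f2 : ∀ i, (x' i : RatFunc ℂ) = ξ i := fun _ => rfl
  have f3 : ∀ a b, evHom q (M' a b) = (M a b).eval (RingHom.id ℂ) q := fun _ _ => rfl
  have f4 : ∀ i, evHom q (x' i) = (ξ i).eval (RingHom.id ℂ) q := fun _ => rfl
  let P := ((List.finRange j).map fun i =>
    M' - x' i • (1 : Matrix (Fin l) (Fin l) (regAt q))).prod
  have e1 : (regAt q).subtype.mapMatrix P =
      ((List.finRange j).map fun i => M - ξ i • (1 : Matrix (Fin l) (Fin l) (RatFunc ℂ))).prod := by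
    rw [map_list_prod, List.map_map]
    congr 2
    funext i
    ext a b
    by_cases hab : a = b <;> simp [f1, f2, hab]
  have e2 : (evHom q).mapMatrix P = 0 := by
    rw [← hp, map_list_prod, List.map_map]
    congr 2
    funext i
    ext a b
    by_cases hab : a = b <;> simp [f3, f4, hab, evalMat]
  rw [← e1]
  have e3 := congrFun (congrFun e2 a) b
  have e4 : (P a b : RatFunc ℂ).num.eval₂ (RingHom.id ℂ) q /
    (P a b : RatFunc ℂ).denom.eval₂ (RingHom.id ℂ) q = 0 := e3
  have e5 : (P a b : RatFunc ℂ).denom.eval₂ (RingHom.id ℂ) q ≠ 0 := (P a b).2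
  exact (div_eq_zero_iff.1 e4).resolve_right e5

/-- Let `M` be an `ℓ×ℓ` matrix over `ℂ(q)`, let `ξ_1,…,ξ_j ∈ ℂ(q)` be
pairwise distinct and `m_1,…,m_j` nonnegative integers.  Suppose (1) for infinitely many
`q₀ ∈ ℂ` all entries of `M` and all `ξ_i` are defined at `q₀` (no pole, i.e. the
denominator does not vanish) and `∏_i (M(q₀) - ξ_i(q₀)·Id) = 0`; and (2) everything is
defined at `q₀ = 1`, the values `ξ_i(1)` are pairwise distinct, and the characteristic
polynomial of `M(1)` is `∏_i (t - ξ_i(1))^{m_i}`.  Then the characteristic polynomial of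
`M` over `ℂ(q)` is `∏_i (t - ξ_i)^{m_i}`. -/
theorem charpoly_specialization (l j : ℕ) (M : Matrix (Fin l) (Fin l) (RatFunc ℂ))
    (ξ : Fin j → RatFunc ℂ) (hξ : Function.Injective ξ) (mm : Fin j → ℕ)
    (h1 : {q₀ : ℂ |
      (∀ a b : Fin l, Polynomial.eval q₀ (M a b).denom ≠ 0) ∧
      (∀ i : Fin j, Polynomial.eval q₀ (ξ i).denom ≠ 0) ∧
      ((List.finRange j).map fun i =>
          evalMat q₀ M -
            (ξ i).eval (RingHom.id ℂ) q₀ • (1 : Matrix (Fin l) (Fin l) ℂ)).prod = 0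
      }.Infinite)
    (h2a : ∀ a b : Fin l, Polynomial.eval (1 : ℂ) (M a b).denom ≠ 0)
    (h2b : ∀ i : Fin j, Polynomial.eval (1 : ℂ) (ξ i).denom ≠ 0)
    (h2c : Function.Injective fun i : Fin j => (ξ i).eval (RingHom.id ℂ) 1)
    (h2d : Matrix.charpoly (evalMat 1 M) =
      ∏ i : Fin j,
        (Polynomial.X - Polynomial.C ((ξ i).eval (RingHom.id ℂ) 1)) ^ mm i) :
    Matrix.charpoly M =
      ∏ i : Fin j, (Polynomial.X - Polynomial.C (ξ i)) ^ mm i := by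
  obtain ⟨k, hk⟩ := charpoly_eq_of_annihilate M ξ hξ (annihilate_of_infinite M ξ h1)
  let M' : Matrix (Fin l) (Fin l) (regAt 1) := fun a b => ⟨M a b, h2a a b⟩
  let x' : Fin j → regAt 1 := fun i => ⟨ξ i, h2b i⟩
  have e1 : M'.map (regAt 1).subtype = M := rfl
  have e2 : M'.map (evHom 1) = evalMat 1 M := rfl
  have e3 : M'.charpoly = ∏ i, (Polynomial.X - Polynomial.C (x' i)) ^ k i := by
    apply Polynomial.map_injective (regAt 1).subtype Subtype.val_injective
    rw [← Matrix.charpoly_map, e1, hk, Polynomial.map_prod]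
    simp [x']
  have e4 := congrArg (Polynomial.map (evHom 1)) e3
  rw [← Matrix.charpoly_map, e2, h2d, Polynomial.map_prod] at e4
  have e5 : mm = k := by
    refine exps_eq _ h2c mm k (e4.trans ?_)
    simp
    rfl
  rw [hk, e5]

end QTsetlin
end
end
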